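/- arXiv:1011.5833 — 2 statements merged into one kernel-verified Lean document; each statement's English description precedes it below -/
import Mathlib

section
/- Let d ≥ 2 and n = d + 2, let y and y₁ be two linearly independent solutions of the Schrödinger equation with parameters (α, λ), and let f = y/y₁. For every j ∈ {0,…,n−1}: f has asymptotic value 0 in the Stokes sector S_j (i.e., f(r·e^{iθ}) → 0 as r → +∞ for every θ with |θ − 2πj/n| < π/n) if and only if y is subdominant in S_j. -/
open Complex Filter Topology

/-- The polynomial potential `P_α(z) = z^d + α_{d-1} z^{d-1} + ⋯ + α₁ z`. -/
noncomputable def Pol (d : ℕ) (α : Fin (d - 1) → ℂ) (z : ℂ) : ℂ :=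
  z ^ d + ∑ i : Fin (d - 1), α i * z ^ ((i : ℕ) + 1)

/-- `y` is an (entire) solution of the Schrödinger equation `y'' = (P_α - λ) y`. -/
def IsSol (d : ℕ) (α : Fin (d - 1) → ℂ) (lam : ℂ) (y : ℂ → ℂ) : Prop :=
  Differentiable ℂ y ∧ ∀ z : ℂ, deriv (deriv y) z = (Pol d α z - lam) * y z

/-- `θ` is a ray direction of the Stokes sector `S_j`. -/
def DirIn (n j : ℕ) (θ : ℝ) : Prop :=
  |θ - 2 * Real.pi * j / n| < Real.pi / n

/-- `y` is subdominant in the Stokes sector `S_j`: it tends to `0` along every ray in `S_j`. -/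
def Subdominant (n j : ℕ) (y : ℂ → ℂ) : Prop :=
  ∀ θ : ℝ, DirIn n j θ →
    Tendsto (fun r : ℝ => y ((r : ℂ) * Complex.exp (θ * Complex.I))) atTop (𝓝 0)

/-!
Along the ray `z = r * e` the Schrödinger equation becomes `u'' = Q u` with `Q r ~ a * r ^ d` and
`a = e ^ (d + 2)`; in an open Stokes sector `a` is not a nonpositive real, so some `κ` rotates
both `1` and `a` into the right half-plane. Hence the energy `E = re (κ * u' * conj u)` satisfies
`E' ≥ c * (|u|² + |u'|²)` for large `r`, which leaves two cases. If `E ≤ 0` forever, then `u` and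
`u'` are square integrable and `u → 0`. If `E` becomes positive, then `1 / |u|²` is dominated by a
multiple of `(-1 / E)'` and is therefore integrable; so `u` does not tend to `0`, and by reduction
of order `v / u` converges for every solution `v`. Two independent solutions cannot both be of the
first kind, because their Wronskian is a nonzero constant, and the equivalence follows by
comparing the two cases.
-/

section IntegralsOnHalfLines

open MeasureTheory Set

lemma integrableOn_Ioi_of_norm_le_deriv {E : Type*} [NormedAddCommGroup E] {F : ℝ → E}
    {g g' : ℝ → ℝ} {a B : ℝ} (hF : ContinuousOn F (Ici a))
    (hg : ∀ x ∈ Ici a, HasDerivAt g (g' x) x) (hFg : ∀ x ∈ Ici a, ‖F x‖ ≤ g' x)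
    (hB : ∀ x ∈ Ici a, g x ≤ B) : IntegrableOn F (Ioi a) := by
  refine integrableOn_Ioi_of_intervalIntegral_norm_bounded (B - g a) a
    (fun b => ((hF.mono Icc_subset_Ici_self).integrableOn_Icc).mono_set Ioc_subset_Icc_self)
    tendsto_id ?_
  filter_upwards [eventually_ge_atTop a] with b hab
  calc ∫ x in a..b, ‖F x‖
      ≤ g b - g a := intervalIntegral.integral_le_sub_of_hasDeriv_right_of_le hab
        (fun x hx => (hg x hx.1).continuousAt.continuousWithinAt)
        (fun x hx => (hg x hx.1.le).hasDerivWithinAt)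
        (hF.mono Icc_subset_Ici_self).norm.integrableOn_Icc (fun x hx => hFg x hx.1.le)
    _ ≤ B - g a := sub_le_sub_right (hB b hab) _

lemma nonpos_of_eventually_le_of_integrableOn_Ioi {f : ℝ → ℝ} {a δ : ℝ}
    (hf : IntegrableOn f (Ioi a)) (hδ : ∀ᶠ x in atTop, δ ≤ f x) : δ ≤ 0 := by
  by_contra! hpos
  obtain ⟨b, hb⟩ := eventually_atTop.1 hδ
  have hconst : IntegrableOn (fun _ => δ) (Ioi (max a b)) :=
    (hf.mono_set (Ioi_subset_Ioi (le_max_left a b))).mono' aestronglyMeasurable_const <|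
      (ae_restrict_mem measurableSet_Ioi).mono fun x hx => by
        rw [Real.norm_of_nonneg hpos.le]
        exact hb x ((le_max_right a b).trans hx.le)
  simp [integrableOn_const_iff, hpos.ne'] at hconst

end IntegralsOnHalfLines

section RayEquation

open MeasureTheory Set

open scoped RealInnerProductSpace

/-- `u` solves the linear equation `u'' = Q u` along `s ⊆ ℝ`. The derivative `u'` is carried
explicitly, so that this is a first-order system for the pair `(u, u')`. -/
structure IsSolOn (Q : ℝ → ℂ) (s : Set ℝ) (u u' : ℝ → ℂ) : Prop where
  hasDerivAt : ∀ r ∈ s, HasDerivAt u (u' r) r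
  hasDerivAt_deriv : ∀ r ∈ s, HasDerivAt u' (Q r * u r) r

/-- The multiplier `κ` rotates both `1` and the potential `Q` into the half-plane `c ≤ re z`
along `s`. This makes the energy of every solution of `u'' = Q u` increase at a definite rate. -/
structure IsCoerciveOn (Q : ℝ → ℂ) (κ : ℂ) (c : ℝ) (s : Set ℝ) : Prop where
  pos : 0 < c
  le_re : c ≤ κ.re
  le_re_mul : ∀ r ∈ s, c ≤ (κ * Q r).re

/-- The energy `re (κ * u' * conj u)` of a solution `(u, u')` of `u'' = Q u`. For a coercive
multiplier `κ`, its sign distinguishes decaying solutions (nonpositive energy forever) from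
dominant ones. -/
noncomputable def energy (κ : ℂ) (u u' : ℝ → ℂ) (r : ℝ) : ℝ :=
  ⟪u r, κ * u' r⟫

variable {Q u u' v v' : ℝ → ℂ} {κ W : ℂ} {c R : ℝ} {s t : Set ℝ}

lemma real_inner_mul_self (a z : ℂ) : ⟪z, a * z⟫ = a.re * ‖z‖ ^ 2 := by
  rw [Complex.inner, mul_assoc, mul_conj', ← ofReal_pow, re_mul_ofReal]

lemma energy_le (κ : ℂ) (u u' : ℝ → ℂ) (r : ℝ) :
    energy κ u u' r ≤ ‖κ‖ * ‖u r‖ * ‖u' r‖ :=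
  calc energy κ u u' r ≤ ‖u r‖ * ‖κ * u' r‖ := real_inner_le_norm _ _
    _ = ‖κ‖ * ‖u r‖ * ‖u' r‖ := by rw [norm_mul]; ring

lemma energy_eq_zero_of_apply_eq_zero {r : ℝ} (h : u r = 0) : energy κ u u' r = 0 := by
  rw [energy, h, inner_zero_left]

lemma IsCoerciveOn.mono (hQ : IsCoerciveOn Q κ c t) (hst : s ⊆ t) : IsCoerciveOn Q κ c s :=
  ⟨hQ.pos, hQ.le_re, fun r hr => hQ.le_re_mul r (hst hr)⟩

lemma IsCoerciveOn.mul_le (hQ : IsCoerciveOn Q κ c s) {r : ℝ} (hr : r ∈ s) (u u' : ℝ → ℂ) :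
    c * (‖u r‖ ^ 2 + ‖u' r‖ ^ 2) ≤ (κ * Q r).re * ‖u r‖ ^ 2 + κ.re * ‖u' r‖ ^ 2 := by
  rw [mul_add]
  gcongr
  exacts [hQ.le_re_mul r hr, hQ.le_re]

namespace IsSolOn

lemma mono (hu : IsSolOn Q t u u') (hst : s ⊆ t) : IsSolOn Q s u u' :=
  ⟨fun r hr => hu.hasDerivAt r (hst hr), fun r hr => hu.hasDerivAt_deriv r (hst hr)⟩

lemma continuousOn (hu : IsSolOn Q s u u') : ContinuousOn u s :=
  HasDerivAt.continuousOn hu.hasDerivAt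

lemma continuousOn_deriv (hu : IsSolOn Q s u u') : ContinuousOn u' s :=
  HasDerivAt.continuousOn hu.hasDerivAt_deriv

lemma hasDerivAt_energy (hu : IsSolOn Q s u u') (κ : ℂ) {r : ℝ} (hr : r ∈ s) :
    HasDerivAt (energy κ u u') ((κ * Q r).re * ‖u r‖ ^ 2 + κ.re * ‖u' r‖ ^ 2) r := by
  refine ((hu.hasDerivAt r hr).inner ℝ ((hu.hasDerivAt_deriv r hr).const_mul κ)).congr_deriv ?_
  rw [← mul_assoc, real_inner_mul_self, real_inner_mul_self]

lemma monotoneOn_energy (hu : IsSolOn Q (Ici R) u u') (hQ : IsCoerciveOn Q κ c (Ici R)) :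
    MonotoneOn (energy κ u u') (Ici R) :=
  monotoneOn_of_hasDerivWithinAt_nonneg (convex_Ici R)
    (HasDerivAt.continuousOn fun _ hr => hu.hasDerivAt_energy κ hr)
    (fun _ hr => (hu.hasDerivAt_energy κ (interior_subset hr)).hasDerivWithinAt)
    fun _ hr => (mul_nonneg hQ.pos.le (by positivity)).trans (hQ.mul_le (interior_subset hr) u u')

lemma strictMonoOn_energy (hu : IsSolOn Q (Ici R) u u') (hQ : IsCoerciveOn Q κ c (Ici R))
    (hne : ∀ r ∈ Ici R, u r ≠ 0 ∨ u' r ≠ 0) : StrictMonoOn (energy κ u u') (Ici R) :=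
  strictMonoOn_of_hasDerivWithinAt_pos (convex_Ici R)
    (HasDerivAt.continuousOn fun _ hr => hu.hasDerivAt_energy κ hr)
    (fun _ hr => (hu.hasDerivAt_energy κ (interior_subset hr)).hasDerivWithinAt) fun r hr => by
      have hpos : 0 < ‖u r‖ ^ 2 + ‖u' r‖ ^ 2 := by
        rcases hne r (interior_subset hr) with h | h <;> positivity
      exact (hQ.mul_le (interior_subset hr) u u').trans_lt' (mul_pos hQ.pos hpos)

-- The energy vanishes wherever `v` does, and it is strictly increasing: `v` has at most one zero.
lemma eventually_ne_zero (hv : IsSolOn Q (Ici R) v v') (hQ : IsCoerciveOn Q κ c (Ici R))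
    (hne : ∀ r ∈ Ici R, v r ≠ 0 ∨ v' r ≠ 0) : ∀ᶠ r in atTop, v r ≠ 0 := by
  by_cases h : ∃ r₀ ∈ Ici R, v r₀ = 0
  · obtain ⟨r₀, hr₀, hv₀⟩ := h
    filter_upwards [eventually_gt_atTop r₀] with r hr hvr
    have hlt := hv.strictMonoOn_energy hQ hne hr₀ (hr₀.trans hr.le) hr
    rw [energy_eq_zero_of_apply_eq_zero hv₀, energy_eq_zero_of_apply_eq_zero hvr] at hlt
    exact hlt.false
  · push Not at h
    filter_upwards [eventually_ge_atTop R] with r hr using h r hr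

lemma integrableOn_of_energy_nonpos (hu : IsSolOn Q (Ici R) u u')
    (hQ : IsCoerciveOn Q κ c (Ici R)) (hE : ∀ r ∈ Ici R, energy κ u u' r ≤ 0) :
    IntegrableOn (fun r => ‖u r‖ ^ 2 + ‖u' r‖ ^ 2) (Ioi R) := by
  refine integrableOn_Ioi_of_norm_le_deriv (B := 0)
    ((hu.continuousOn.norm.pow 2).add (hu.continuousOn_deriv.norm.pow 2))
    (fun r hr => (hu.hasDerivAt_energy κ hr).const_mul c⁻¹) (fun r hr => ?_)
    fun r hr => mul_nonpos_of_nonneg_of_nonpos (inv_nonneg.2 hQ.pos.le) (hE r hr)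
  rw [Real.norm_of_nonneg (by positivity), le_inv_mul_iff₀ hQ.pos]
  exact hQ.mul_le hr u u'

lemma tendsto_zero_of_energy_nonpos (hu : IsSolOn Q (Ici R) u u')
    (hQ : IsCoerciveOn Q κ c (Ici R)) (hE : ∀ r ∈ Ici R, energy κ u u' r ≤ 0) :
    Tendsto u atTop (𝓝 0) := by
  have hint := hu.integrableOn_of_energy_nonpos hQ hE
  have hu_int : IntegrableOn (fun r => ‖u r‖ ^ 2) (Ioi R) :=
    hint.mono' (((hu.continuousOn.norm.pow 2).mono Ioi_subset_Ici_self).aestronglyMeasurable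
      measurableSet_Ioi) <| .of_forall fun r => by
        rw [Real.norm_of_nonneg (by positivity)]
        exact le_add_of_nonneg_right (by positivity)
  have hderiv_int : IntegrableOn (fun r => 2 * ⟪u r, u' r⟫) (Ioi R) :=
    hint.mono' ((((hu.continuousOn.inner hu.continuousOn_deriv).const_mul 2).mono
      Ioi_subset_Ici_self).aestronglyMeasurable measurableSet_Ioi) <| .of_forall fun r => by
        rw [Real.norm_eq_abs, abs_mul, abs_two]
        linarith [abs_real_inner_le_norm (u r) (u' r), two_mul_le_add_sq ‖u r‖ ‖u' r‖]
  have hsq : Tendsto (fun r => ‖u r‖ ^ 2) atTop (𝓝 0) :=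
    tendsto_zero_of_hasDerivAt_of_integrableOn_Ioi
      (fun r hr => (hu.hasDerivAt r (Ioi_subset_Ici_self hr)).norm_sq) hderiv_int hu_int
  rw [tendsto_zero_iff_norm_tendsto_zero]
  simpa only [Real.sqrt_sq (norm_nonneg _), Real.sqrt_zero] using hsq.sqrt

lemma energy_pos (hu : IsSolOn Q (Ici R) u u') (hQ : IsCoerciveOn Q κ c (Ici R))
    (hE : 0 < energy κ u u' R) {r : ℝ} (hr : r ∈ Ici R) : 0 < energy κ u u' r :=
  hE.trans_le (hu.monotoneOn_energy hQ self_mem_Ici hr hr)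

lemma ne_zero_of_energy_pos (hu : IsSolOn Q (Ici R) u u') (hQ : IsCoerciveOn Q κ c (Ici R))
    (hE : 0 < energy κ u u' R) {r : ℝ} (hr : r ∈ Ici R) : u r ≠ 0 := fun h =>
  (hu.energy_pos hQ hE hr).ne' (energy_eq_zero_of_apply_eq_zero h)

-- Since `energy ^ 2 ≤ ‖κ‖ ^ 2 * ‖u‖ ^ 2 * ‖u'‖ ^ 2` and `c * ‖u'‖ ^ 2 ≤ energy'`, the function
-- `‖u‖⁻²` is dominated by a multiple of the derivative of `-1 / energy`, which is bounded above.
lemma integrableOn_inv_sq_of_energy_pos (hu : IsSolOn Q (Ici R) u u')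
    (hQ : IsCoerciveOn Q κ c (Ici R)) (hE : 0 < energy κ u u' R) :
    IntegrableOn (fun r => (u r ^ 2)⁻¹) (Ioi R) := by
  have hne : ∀ r ∈ Ici R, u r ≠ 0 := fun r => hu.ne_zero_of_energy_pos hQ hE
  have hpos : ∀ r ∈ Ici R, 0 < energy κ u u' r := fun r => hu.energy_pos hQ hE
  refine integrableOn_Ioi_of_norm_le_deriv (B := 0)
    ((hu.continuousOn.pow 2).inv₀ fun r hr => pow_ne_zero 2 (hne r hr))
    (fun r hr => ((hu.hasDerivAt_energy κ hr).fun_inv (hpos r hr).ne').const_mul (-(‖κ‖ ^ 2 / c)))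
    (fun r hr => ?_) fun r hr => ?_
  · have hnorm : 0 < ‖u r‖ := norm_pos_iff.2 (hne r hr)
    have henergy : energy κ u u' r ^ 2 ≤ ‖κ‖ ^ 2 * ‖u r‖ ^ 2 * ‖u' r‖ ^ 2 := by
      simpa only [mul_pow] using pow_le_pow_left₀ (hpos r hr).le (energy_le κ u u' r) 2
    have hderiv : c * ‖u' r‖ ^ 2 ≤ (κ * Q r).re * ‖u r‖ ^ 2 + κ.re * ‖u' r‖ ^ 2 :=
      (mul_le_mul_of_nonneg_left (le_add_of_nonneg_left (sq_nonneg _)) hQ.pos.le).trans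
        (hQ.mul_le hr u u')
    rw [norm_inv, norm_pow, neg_div, neg_mul_neg, div_mul_div_comm,
      inv_le_iff_one_le_mul₀ (by positivity), div_mul_eq_mul_div,
      le_div_iff₀ (mul_pos hQ.pos (pow_pos (hpos r hr) 2)), one_mul]
    calc c * energy κ u u' r ^ 2 ≤ c * (‖κ‖ ^ 2 * ‖u r‖ ^ 2 * ‖u' r‖ ^ 2) :=
          mul_le_mul_of_nonneg_left henergy hQ.pos.le
      _ = ‖u r‖ ^ 2 * (‖κ‖ ^ 2 * (c * ‖u' r‖ ^ 2)) := by ring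
      _ ≤ ‖u r‖ ^ 2 * (‖κ‖ ^ 2 * ((κ * Q r).re * ‖u r‖ ^ 2 + κ.re * ‖u' r‖ ^ 2)) := by gcongr
      _ = ‖κ‖ ^ 2 * ((κ * Q r).re * ‖u r‖ ^ 2 + κ.re * ‖u' r‖ ^ 2) * ‖u r‖ ^ 2 := mul_comm _ _
  · exact mul_nonpos_of_nonpos_of_nonneg (neg_nonpos.2 (div_nonneg (sq_nonneg _) hQ.pos.le))
      (inv_nonneg.2 (hpos r hr).le)

lemma not_tendsto_zero_of_energy_pos (hu : IsSolOn Q (Ici R) u u')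
    (hQ : IsCoerciveOn Q κ c (Ici R)) (hE : 0 < energy κ u u' R) :
    ¬ Tendsto u atTop (𝓝 0) := by
  intro h
  refine one_pos.not_ge (nonpos_of_eventually_le_of_integrableOn_Ioi
    (hu.integrableOn_inv_sq_of_energy_pos hQ hE).norm ?_)
  filter_upwards [h.norm.eventually_lt_const (norm_zero.trans_lt one_pos),
    eventually_ge_atTop R] with r hr hRr
  rw [norm_inv, norm_pow, one_le_inv₀ (by have := hu.ne_zero_of_energy_pos hQ hE hRr; positivity)]
  exact pow_le_one₀ (norm_nonneg _) hr.le

lemma energy_nonpos_of_tendsto_zero (hu : IsSolOn Q (Ici R) u u')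
    (hQ : IsCoerciveOn Q κ c (Ici R)) (h : Tendsto u atTop (𝓝 0)) {r : ℝ} (hr : r ∈ Ici R) :
    energy κ u u' r ≤ 0 := by
  by_contra! hE
  have hsub : Ici r ⊆ Ici R := Ici_subset_Ici.2 hr
  exact (hu.mono hsub).not_tendsto_zero_of_energy_pos (hQ.mono hsub) hE h

lemma exists_energy_pos_of_tendsto_zero (hu : IsSolOn Q (Ici R) u u')
    (hv : IsSolOn Q (Ici R) v v') (hQ : IsCoerciveOn Q κ c (Ici R)) (hW : W ≠ 0)
    (hw : ∀ r ∈ Ici R, u r * v' r - u' r * v r = W) (hu₀ : Tendsto u atTop (𝓝 0)) :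
    ∃ r ∈ Ici R, 0 < energy κ v v' r := by
  by_contra! hEv
  have hint := (hu.integrableOn_of_energy_nonpos hQ fun r =>
    hu.energy_nonpos_of_tendsto_zero hQ hu₀).add (hv.integrableOn_of_energy_nonpos hQ hEv)
  refine (norm_pos_iff.2 hW).not_ge (nonpos_of_eventually_le_of_integrableOn_Ioi hint ?_)
  filter_upwards [eventually_ge_atTop R] with r hr
  have hle : ‖W‖ ≤ ‖u r‖ * ‖v' r‖ + ‖u' r‖ * ‖v r‖ := by
    rw [← hw r hr, ← norm_mul, ← norm_mul]
    exact norm_sub_le _ _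
  simp only [Pi.add_apply]
  nlinarith [two_mul_le_add_sq ‖u r‖ ‖v' r‖, two_mul_le_add_sq ‖u' r‖ ‖v r‖,
    mul_nonneg (norm_nonneg (u r)) (norm_nonneg (v' r)),
    mul_nonneg (norm_nonneg (u' r)) (norm_nonneg (v r))]

-- Reduction of order: `(v / u)' = W / u ^ 2`, which is integrable.
lemma exists_tendsto_div_of_energy_pos (hu : IsSolOn Q (Ici R) u u')
    (hv : IsSolOn Q (Ici R) v v') (hQ : IsCoerciveOn Q κ c (Ici R))
    (hw : ∀ r ∈ Ici R, u r * v' r - u' r * v r = W) {r₀ : ℝ} (hr₀ : r₀ ∈ Ici R)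
    (hE : 0 < energy κ u u' r₀) : ∃ L, Tendsto (fun r => v r / u r) atTop (𝓝 L) := by
  have hsub : Ici r₀ ⊆ Ici R := Ici_subset_Ici.2 hr₀
  have hQ₀ := hQ.mono hsub
  have hu₀ := hu.mono hsub
  refine ⟨_, tendsto_limUnder_of_hasDerivAt_of_integrableOn_Ioi (a := r₀) (fun r hr => ?_)
    ((hu₀.integrableOn_inv_sq_of_energy_pos hQ₀ hE).const_mul W)⟩
  have hrR : r ∈ Ici R := hsub (Ioi_subset_Ici_self hr)
  refine ((hv.hasDerivAt r hrR).fun_div (hu.hasDerivAt r hrR)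
    (hu₀.ne_zero_of_energy_pos hQ₀ hE (Ioi_subset_Ici_self hr))).congr_deriv ?_
  rw [← hw r hrR, div_eq_mul_inv]
  ring

lemma eventually_ne_zero_of_wronskian (hu : IsSolOn Q (Ici R) u u')
    (hv : IsSolOn Q (Ici R) v v') (hQ : IsCoerciveOn Q κ c (Ici R)) (hW : W ≠ 0)
    (hw : ∀ r ∈ Ici R, u r * v' r - u' r * v r = W) : ∀ᶠ r in atTop, u r ≠ 0 ∧ v r ≠ 0 := by
  refine (hu.eventually_ne_zero hQ fun r hr => ?_).and (hv.eventually_ne_zero hQ fun r hr => ?_)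
  all_goals
    by_contra! h
    exact hW (by rw [← hw r hr, h.1, h.2]; ring)

lemma tendsto_zero_of_tendsto_div_zero (hu : IsSolOn Q (Ici R) u u')
    (hv : IsSolOn Q (Ici R) v v') (hQ : IsCoerciveOn Q κ c (Ici R)) (hW : W ≠ 0)
    (hw : ∀ r ∈ Ici R, u r * v' r - u' r * v r = W)
    (hdiv : Tendsto (fun r => u r / v r) atTop (𝓝 0)) : Tendsto u atTop (𝓝 0) := by
  refine hu.tendsto_zero_of_energy_nonpos hQ ?_
  by_contra! hE
  obtain ⟨r₀, hr₀, hE₀⟩ := hE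
  obtain ⟨L, hL⟩ := hu.exists_tendsto_div_of_energy_pos hv hQ hw hr₀ hE₀
  have hone : Tendsto (fun _ : ℝ => (1 : ℂ)) atTop (𝓝 0) := by
    refine ((zero_mul L) ▸ hdiv.mul hL).congr' ?_
    filter_upwards [hu.eventually_ne_zero_of_wronskian hv hQ hW hw] with r hr
    rw [div_mul_div_cancel₀ hr.2, div_self hr.1]
  exact one_ne_zero (tendsto_const_nhds_iff.1 hone)

-- A nonzero limit of `u / v` would make `v` decay along with `u`.
lemma tendsto_div_zero_of_tendsto_zero (hu : IsSolOn Q (Ici R) u u')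
    (hv : IsSolOn Q (Ici R) v v') (hQ : IsCoerciveOn Q κ c (Ici R)) (hW : W ≠ 0)
    (hw : ∀ r ∈ Ici R, u r * v' r - u' r * v r = W) (hu₀ : Tendsto u atTop (𝓝 0)) :
    Tendsto (fun r => u r / v r) atTop (𝓝 0) := by
  obtain ⟨r₀, hr₀, hE₀⟩ := hu.exists_energy_pos_of_tendsto_zero hv hQ hW hw hu₀
  have hw_swap : ∀ r ∈ Ici R, v r * u' r - v' r * u r = -W := fun r hr => by
    rw [← hw r hr]
    ring
  obtain ⟨L, hL⟩ := hv.exists_tendsto_div_of_energy_pos hu hQ hw_swap hr₀ hE₀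
  suffices hL₀ : L = 0 from hL₀ ▸ hL
  by_contra hL₀
  have hquot : Tendsto (fun r => u r / (u r / v r)) atTop (𝓝 0) :=
    zero_div L ▸ hu₀.div hL hL₀
  have hv₀ : Tendsto v atTop (𝓝 0) := by
    refine hquot.congr' ?_
    filter_upwards [hu.eventually_ne_zero_of_wronskian hv hQ hW hw] with r hr
    exact div_div_cancel₀ hr.1
  exact (hv.energy_nonpos_of_tendsto_zero hQ hv₀ hr₀).not_gt hE₀

theorem tendsto_div_zero_iff (hu : IsSolOn Q (Ici R) u u') (hv : IsSolOn Q (Ici R) v v')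
    (hQ : IsCoerciveOn Q κ c (Ici R)) (hW : W ≠ 0)
    (hw : ∀ r ∈ Ici R, u r * v' r - u' r * v r = W) :
    Tendsto (fun r => u r / v r) atTop (𝓝 0) ↔ Tendsto u atTop (𝓝 0) :=
  ⟨hu.tendsto_zero_of_tendsto_div_zero hv hQ hW hw,
    hu.tendsto_div_zero_of_tendsto_zero hv hQ hW hw⟩

end IsSolOn

end RayEquation

section Coercivity

open Set

lemma norm_add_re_pos_of_mem_slitPlane {a : ℂ} (ha : a ∈ slitPlane) : 0 < ‖a‖ + a.re := by
  rcases mem_slitPlane_iff.1 ha with h | h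
  · positivity
  · linarith [neg_le_abs a.re, abs_re_lt_norm.2 h]

-- The multiplier `‖a‖ + conj a` rotates `a` and `1` symmetrically: its products with them have
-- real parts `‖a‖ * (‖a‖ + re a)` and `‖a‖ + re a`.
lemma exists_isCoerciveOn_of_tendsto_div_pow {Q : ℝ → ℂ} {a : ℂ} {m : ℕ} (ha : a ∈ slitPlane)
    (hQ : Tendsto (fun r : ℝ => Q r / r ^ m) atTop (𝓝 a)) :
    ∃ κ c R, IsCoerciveOn Q κ c (Ici R) := by
  set ε := ‖a‖ + a.re with hε
  set κ : ℂ := ‖a‖ + starRingEnd ℂ a with hκ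
  have hε_pos : 0 < ε := norm_add_re_pos_of_mem_slitPlane ha
  have hκ_re : κ.re = ε := by simp [hκ, hε]
  have hκa_re : (κ * a).re = ‖a‖ * ε := by
    rw [hκ, hε, add_mul, conj_mul', add_re, re_ofReal_mul, ← ofReal_pow, ofReal_re]
    ring
  have ha_pos : 0 < ‖a‖ * ε := mul_pos (norm_pos_iff.2 (slitPlane_ne_zero ha)) hε_pos
  have hlim : Tendsto (fun r : ℝ => (κ * (Q r / r ^ m)).re) atTop (𝓝 (‖a‖ * ε)) :=
    hκa_re ▸ (continuous_re.tendsto _).comp (hQ.const_mul κ)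
  obtain ⟨R, hR⟩ := eventually_atTop.1
    ((hlim.eventually_const_le (half_lt_self ha_pos)).and (eventually_ge_atTop 1))
  refine ⟨κ, min ε (‖a‖ * ε / 2), R, lt_min hε_pos (half_pos ha_pos),
    (min_le_left _ _).trans_eq hκ_re.symm, fun r hr => (min_le_right _ _).trans ?_⟩
  obtain ⟨hge, hr_one⟩ := hR r hr
  have hr_ne : (r : ℂ) ≠ 0 := ofReal_ne_zero.2 (zero_lt_one.trans_le hr_one).ne'
  calc ‖a‖ * ε / 2 ≤ (κ * (Q r / r ^ m)).re := hge
    _ ≤ (κ * (Q r / r ^ m)).re * r ^ m :=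
      le_mul_of_one_le_right ((half_pos ha_pos).le.trans hge) (one_le_pow₀ hr_one)
    _ = (κ * Q r).re := by
      rw [← re_mul_ofReal, ofReal_pow, mul_assoc, div_mul_cancel₀ _ (pow_ne_zero m hr_ne)]

end Coercivity

section EntireSolutions

open Set

/-- The Wronskian of two functions of a complex variable, with the sign convention of
`Polynomial.wronskian`. -/
noncomputable def wronskian (f g : ℂ → ℂ) (z : ℂ) : ℂ :=
  f z * deriv g z - deriv f z * g z

/-- `y` is an entire solution of `y'' = V y`, for an arbitrary potential `V`. -/
structure IsEntireSol (V y : ℂ → ℂ) : Prop where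
  differentiable : Differentiable ℂ y
  deriv_deriv : ∀ z, deriv (deriv y) z = V z * y z

lemma exists_eq_smul_of_wronskian_eq_zero {f g : ℂ → ℂ} (hf : Differentiable ℂ f)
    (hg : Differentiable ℂ g) (hg₀ : g ≠ 0) (hW : wronskian f g = 0) : ∃ a : ℂ, f = a • g := by
  obtain ⟨z₀, hz₀⟩ := Function.ne_iff.1 hg₀
  obtain ⟨ε, hε, hball⟩ := Metric.eventually_nhds_iff_ball.1
    (hg.continuous.continuousAt.eventually_ne hz₀)
  have hquot : ∀ z ∈ Metric.ball z₀ ε, f z / g z = f z₀ / g z₀ := fun z hz => by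
    refine Metric.isOpen_ball.is_const_of_deriv_eq_zero (f := fun z => f z / g z)
      (convex_ball z₀ ε).isPreconnected
      (fun x hx => ((hf x).fun_div (hg x) (hball x hx)).differentiableWithinAt) (fun x hx => ?_) hz
      (Metric.mem_ball_self hε)
    have hWx : deriv f x * g x - f x * deriv g x = 0 := by
      rw [← neg_sub, neg_eq_zero]
      exact congrFun hW x
    rw [deriv_fun_div (hf x) (hg x) (hball x hx), hWx, zero_div, Pi.zero_apply]
  refine ⟨f z₀ / g z₀, AnalyticOnNhd.eq_of_eventuallyEq (𝕜 := ℂ) (z₀ := z₀)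
    (fun z _ => hf.analyticAt z) (fun z _ => (hg.const_smul _).analyticAt z) ?_⟩
  filter_upwards [Metric.ball_mem_nhds z₀ hε] with z hz
  rw [Pi.smul_apply, smul_eq_mul, ← hquot z hz, div_mul_cancel₀ _ (hball z hz)]

lemma exists_wronskian_ne_zero {f g : ℂ → ℂ} (hf : Differentiable ℂ f) (hg : Differentiable ℂ g)
    (hfg : LinearIndependent ℂ ![f, g]) : ∃ z, wronskian f g z ≠ 0 := by
  have hg₀ : g ≠ 0 := hfg.ne_zero 1
  by_contra! hW
  obtain ⟨a, ha⟩ := exists_eq_smul_of_wronskian_eq_zero hf hg hg₀ (funext hW)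
  exact (LinearIndependent.pair_iff' hg₀).1 (LinearIndependent.pair_symm_iff.1 hfg) a ha.symm

namespace IsEntireSol

variable {V y y₁ : ℂ → ℂ}

lemma wronskian_eq (hy : IsEntireSol V y) (hy₁ : IsEntireSol V y₁) (z w : ℂ) :
    wronskian y y₁ z = wronskian y y₁ w := by
  have hderiv : ∀ z, HasDerivAt (wronskian y y₁) 0 z := fun z => by
    refine (((hy.differentiable z).hasDerivAt.fun_mul (hy₁.differentiable.deriv z).hasDerivAt).sub
      ((hy.differentiable.deriv z).hasDerivAt.fun_mul
        (hy₁.differentiable z).hasDerivAt)).congr_deriv ?_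
    rw [hy.deriv_deriv, hy₁.deriv_deriv]
    ring
  exact is_const_of_deriv_eq_zero (fun z => (hderiv z).differentiableAt)
    (fun z => (hderiv z).deriv) z w

lemma isSolOn_ray (hy : IsEntireSol V y) (e : ℂ) (s : Set ℝ) :
    IsSolOn (fun r => e ^ 2 * V (r * e)) s (fun r => y (r * e))
      (fun r => e * deriv y (r * e)) := by
  have hray : ∀ r : ℝ, HasDerivAt (fun r : ℝ => (r : ℂ) * e) e r := fun r => by
    simpa using (ofRealCLM.hasDerivAt (x := r)).mul_const e
  refine ⟨fun r _ => (hy.differentiable _).hasDerivAt.scomp r (hray r), fun r _ => ?_⟩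
  refine (((hy.differentiable.deriv _).hasDerivAt.scomp r (hray r)).const_mul e).congr_deriv ?_
  rw [hy.deriv_deriv, smul_eq_mul]
  ring

lemma tendsto_div_ray_zero_iff (hy : IsEntireSol V y) (hy₁ : IsEntireSol V y₁)
    (hind : LinearIndependent ℂ ![y, y₁]) {e κ : ℂ} {c R : ℝ}
    (hV : IsCoerciveOn (fun r => e ^ 2 * V (r * e)) κ c (Ici R)) :
    Tendsto (fun r : ℝ => y (r * e) / y₁ (r * e)) atTop (𝓝 0) ↔
      Tendsto (fun r : ℝ => y (r * e)) atTop (𝓝 0) := by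
  obtain ⟨z₀, hz₀⟩ := exists_wronskian_ne_zero hy.differentiable hy₁.differentiable hind
  have he : e ≠ 0 := by
    rintro rfl
    simpa using hV.pos.trans_le (hV.le_re_mul R self_mem_Ici)
  refine (hy.isSolOn_ray e _).tendsto_div_zero_iff (hy₁.isSolOn_ray e _) hV
    (mul_ne_zero he hz₀) fun r _ => ?_
  rw [← hy.wronskian_eq hy₁ (r * e) z₀, wronskian]
  ring

end IsEntireSol

end EntireSolutions

section PolynomialPotentials

open Polynomial

lemma tendsto_eval_ofReal_mul_div_pow (P : ℂ[X]) (e : ℂ) :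
    Tendsto (fun r : ℝ => P.eval (r * e) / (r : ℂ) ^ P.natDegree) atTop
      (𝓝 (P.leadingCoeff * e ^ P.natDegree)) := by
  have hlower : ∀ i ∈ Finset.range P.natDegree, Tendsto (fun r : ℝ =>
      P.coeff i * e ^ i * ((r : ℂ) ^ i / (r : ℂ) ^ P.natDegree)) atTop (𝓝 0) := fun i hi => by
    have h := (continuous_ofReal.tendsto 0).comp
      (tendsto_pow_div_pow_atTop_zero (𝕜 := ℝ) (Finset.mem_range.1 hi))
    simpa [Function.comp_def] using h.const_mul (P.coeff i * e ^ i)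
  have hsum := (tendsto_finsetSum _ hlower).add_const (P.leadingCoeff * e ^ P.natDegree)
  rw [Finset.sum_const_zero, zero_add] at hsum
  refine hsum.congr' ?_
  filter_upwards [eventually_ne_atTop 0] with r hr
  have hr_pow : (r : ℂ) ^ P.natDegree ≠ 0 := pow_ne_zero _ (ofReal_ne_zero.2 hr)
  rw [eval_eq_sum_range, Finset.sum_range_succ, add_div, Finset.sum_div, coeff_natDegree]
  congr 1
  · exact Finset.sum_congr rfl fun i _ => by rw [mul_pow]; ring
  · rw [mul_pow]
    field_simp

theorem stmt15_general {P : ℂ[X]} {y y₁ : ℂ → ℂ} (hy : IsEntireSol P.eval y)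
    (hy₁ : IsEntireSol P.eval y₁) (hind : LinearIndependent ℂ ![y, y₁]) {e : ℂ}
    (he : P.leadingCoeff * e ^ (P.natDegree + 2) ∈ slitPlane) :
    Tendsto (fun r : ℝ => y (r * e) / y₁ (r * e)) atTop (𝓝 0) ↔
      Tendsto (fun r : ℝ => y (r * e)) atTop (𝓝 0) := by
  have hlim : Tendsto (fun r : ℝ => e ^ 2 * P.eval (r * e) / (r : ℂ) ^ P.natDegree) atTop
      (𝓝 (P.leadingCoeff * e ^ (P.natDegree + 2))) := by
    convert (tendsto_eval_ofReal_mul_div_pow P e).const_mul (e ^ 2) using 2 <;> ring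
  obtain ⟨κ, c, R, hQ⟩ := exists_isCoerciveOn_of_tendsto_div_pow he hlim
  exact hy.tendsto_div_ray_zero_iff hy₁ hind hQ

end PolynomialPotentials

section StokesSectors

open Polynomial

/-- The potential `P_α - λ` of the Schrödinger equation as a polynomial. -/
noncomputable def schrodingerPotential (d : ℕ) (α : Fin (d - 1) → ℂ) (lam : ℂ) : ℂ[X] :=
  X ^ d + (∑ i : Fin (d - 1), C (α i) * X ^ ((i : ℕ) + 1) - C lam)

variable {d : ℕ} {α : Fin (d - 1) → ℂ} {lam : ℂ}

lemma IsSol.isEntireSol {y : ℂ → ℂ} (hy : IsSol d α lam y) :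
    IsEntireSol (schrodingerPotential d α lam).eval y where
  differentiable := hy.1
  deriv_deriv z := by
    rw [hy.2]
    simp [Pol, schrodingerPotential, eval_finsetSum, add_sub_assoc]

lemma degree_sum_C_mul_X_pow_succ_sub_C_lt (hd : 0 < d) :
    (∑ i : Fin (d - 1), C (α i) * X ^ ((i : ℕ) + 1) - C lam).degree < d := by
  refine (degree_sub_le _ _).trans_lt (max_lt ?_ (degree_C_le.trans_lt (Nat.cast_pos.2 hd)))
  refine (degree_sum_le _ _).trans_lt ((Finset.sup_lt_iff (WithBot.bot_lt_coe d)).2 fun i _ => ?_)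
  exact (degree_C_mul_X_pow_le _ _).trans_lt (Nat.cast_lt.2 (Nat.add_lt_of_lt_sub i.2))

lemma monic_schrodingerPotential (hd : 0 < d) : (schrodingerPotential d α lam).Monic :=
  monic_X_pow_add (degree_sum_C_mul_X_pow_succ_sub_C_lt hd)

lemma natDegree_schrodingerPotential (hd : 0 < d) :
    (schrodingerPotential d α lam).natDegree = d := by
  rw [schrodingerPotential, natDegree_add_eq_left_of_degree_lt, natDegree_X_pow]
  rw [degree_X_pow]
  exact degree_sum_C_mul_X_pow_succ_sub_C_lt hd

lemma DirIn.exp_pow_mem_slitPlane {n j : ℕ} {θ : ℝ} (hθ : DirIn n j θ) :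
    exp (θ * I) ^ n ∈ slitPlane := by
  have hn : (0 : ℝ) < n := (div_pos_iff_of_pos_left Real.pi_pos).1 ((abs_nonneg _).trans_lt hθ)
  obtain ⟨ψ, hψ⟩ : ∃ ψ : ℝ, n * (θ - 2 * Real.pi * j / n) = ψ := ⟨_, rfl⟩
  have hψ_lt : |ψ| < Real.pi := by
    rw [← hψ, abs_mul, Nat.abs_cast, mul_comm]
    exact (lt_div_iff₀ hn).1 hθ
  have hnθ : n * θ = ψ + j * (2 * Real.pi) := by
    rw [← hψ]
    field_simp
    ring
  have hexp : exp (θ * I) ^ n = exp (ψ * I) := by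
    rw [← exp_nat_mul, ← mul_assoc, ← ofReal_natCast, ← ofReal_mul, hnθ]
    push_cast
    rw [add_mul, mul_assoc, exp_add, exp_nat_mul_two_pi_mul_I, mul_one]
  rw [hexp, mem_slitPlane_iff_arg, arg_exp_mul_I,
    (toIocMod_eq_self Real.two_pi_pos).2 ⟨(abs_lt.1 hψ_lt).1, by linarith [(abs_lt.1 hψ_lt).2]⟩]
  exact ⟨(abs_lt.1 hψ_lt).2.ne, exp_ne_zero _⟩

lemma DirIn.leadingCoeff_mul_exp_pow_mem_slitPlane (hd : 0 < d) {j : ℕ} {θ : ℝ}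
    (hθ : DirIn (d + 2) j θ) :
    (schrodingerPotential d α lam).leadingCoeff *
      exp (θ * I) ^ ((schrodingerPotential d α lam).natDegree + 2) ∈ slitPlane := by
  rw [(monic_schrodingerPotential hd).leadingCoeff, natDegree_schrodingerPotential hd, one_mul]
  exact hθ.exp_pow_mem_slitPlane

end StokesSectors

theorem stmt15 (d : ℕ) (hd : 2 ≤ d) (n : ℕ) (hn : n = d + 2)
    (α : Fin (d - 1) → ℂ) (lam : ℂ)
    (y y₁ : ℂ → ℂ) (hy : IsSol d α lam y) (hy₁ : IsSol d α lam y₁)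
    (hind : LinearIndependent ℂ ![y, y₁])
    (f : ℂ → ℂ) (hf : f = fun z => y z / y₁ z)
    (j : ℕ) (hj : j < n) :
    (∀ θ : ℝ, DirIn n j θ →
        Tendsto (fun r : ℝ => f ((r : ℂ) * Complex.exp (θ * Complex.I))) atTop (𝓝 0))
      ↔ Subdominant n j y := by
  subst hn hf
  exact forall₂_congr fun θ hθ => stmt15_general hy.isEntireSol hy₁.isEntireSol hind
    (hθ.leadingCoeff_mul_exp_pow_mem_slitPlane (two_pos.trans_le hd))
end

section
/- Let d ≥ 2 and n = d + 2, let y and y₁ be two linearly independent solutions of the Schrödinger equation with parameters (α, λ), and let f = y/y₁. Then the asymptotic values of f in any two adjacent Stokes sectors are different: for every j ∈ {0,…,n−1} (indices mod n), there is no w ∈ ℂ such that f(r·e^{iθ}) → w as r → +∞ along every ray direction θ of S_j and also along every ray direction θ of S_{j+1}; moreover it is not the case that |f(r·e^{iθ})| → +∞ along every ray direction of S_j and also along every ray direction of S_{j+1}. -/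
open Complex Filter Topology

/-!
If `y / y₁` has the same limit `w` in two adjacent sectors, then `u = y - w y₁` is dominated
by `y₁` along rays on either side of their common boundary direction `θ`, where
`exp (i n θ) = -1`; if the limit is infinite, the same holds for `u = y₁` and `y`. We show that
such a `u` vanishes.

Since `P_α(z) - λ ~ z ^ d`, the restriction of `u` to the ray of direction `φ` solves `w'' = q w`
with `q(r) ~ exp (i n φ) r ^ d`. Where `cos (n φ) > 0`, a solution dominated by another one decays
like `exp (-c r ^ (d / 2 + 1))`, by Sturm comparison. We choose `φ = θ ± δ` with
`π / 2 < n δ < π`: then `cos (n φ) > 0`, and the sector between these two rays has opening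
`2 δ < π / (d / 2 + 1)`, so by Phragmén–Lindelöf, `u` being of order `d / 2 + 1`, this decay
carries over to the ray of direction `θ`. There `q(r) ~ -r ^ d`, solutions oscillate, and the
energy `‖w'‖² + r ^ d ‖w‖²` of a nonzero solution cannot decay that fast.
-/

open Asymptotics Bornology

section ExponentialWeight

variable {E E' φ k : ℝ → ℝ} {D : Set ℝ}

theorem antitoneOn_mul_exp (hD : Convex ℝ D) (hE : ∀ r ∈ D, HasDerivAt E (E' r) r)
    (hφ : ∀ r ∈ D, HasDerivAt φ (k r) r) (h : ∀ r ∈ D, E' r + k r * E r ≤ 0) :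
    AntitoneOn (fun r => E r * Real.exp (φ r)) D := by
  have hderiv : ∀ r ∈ D, HasDerivAt (fun r => E r * Real.exp (φ r))
      ((E' r + k r * E r) * Real.exp (φ r)) r := fun r hr =>
    ((hE r hr).mul (hφ r hr).exp).congr_deriv (by ring)
  exact antitoneOn_of_hasDerivWithinAt_nonpos hD
    (fun r hr => (hderiv r hr).continuousAt.continuousWithinAt)
    (fun r hr => (hderiv r (interior_subset hr)).hasDerivWithinAt)
    (fun r hr => mul_nonpos_of_nonpos_of_nonneg (h r (interior_subset hr)) (Real.exp_pos _).le)

theorem monotoneOn_mul_exp (hD : Convex ℝ D) (hE : ∀ r ∈ D, HasDerivAt E (E' r) r)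
    (hφ : ∀ r ∈ D, HasDerivAt φ (k r) r) (h : ∀ r ∈ D, 0 ≤ E' r + k r * E r) :
    MonotoneOn (fun r => E r * Real.exp (φ r)) D := by
  have hneg := antitoneOn_mul_exp (E := -E) (E' := -E') hD (fun r hr => (hE r hr).neg) hφ
    (fun r hr => by
      have := h r hr
      simp only [Pi.neg_apply]
      linarith)
  simpa using hneg.neg

end ExponentialWeight

section HalfPower

variable (d : ℕ) {r : ℝ}

theorem rpow_half_sq (hr : 0 ≤ r) : (r ^ ((d : ℝ) / 2)) ^ 2 = r ^ d := by
  rw [← Real.rpow_mul_natCast hr]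
  norm_num

theorem hasDerivAt_const_mul_rpow_half_add_one (c : ℝ) :
    HasDerivAt (fun r : ℝ => c * r ^ ((d : ℝ) / 2 + 1))
      (c * ((d / 2 + 1) * r ^ ((d : ℝ) / 2))) r := by
  simpa using (Real.hasDerivAt_rpow_const (x := r) (p := (d : ℝ) / 2 + 1)
    (Or.inr (le_add_of_nonneg_left (by positivity)))).const_mul c

theorem tendsto_pow_mul_exp_neg_mul_rpow (k : ℕ) {c p : ℝ} (hc : 0 < c) (hp : 0 < p) :
    Tendsto (fun r : ℝ => r ^ k * Real.exp (-(c * r ^ p))) atTop (𝓝 0) := by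
  refine ((tendsto_rpow_mul_exp_neg_mul_atTop_nhds_zero (k / p) c hc).comp
    (tendsto_rpow_atTop hp)).congr' ?_
  filter_upwards [eventually_ge_atTop 0] with r hr
  simp only [Function.comp_apply, ← Real.rpow_mul hr, mul_div_cancel₀ _ hp.ne',
    Real.rpow_natCast, neg_mul]

end HalfPower

theorem natCast_mul_pow_pred_le {d : ℕ} {B r : ℝ} (hr : 0 < r) (hB : d ≤ B * r) :
    d * r ^ (d - 1) ≤ B * r ^ d := by
  cases d with
  | zero => simpa using nonneg_of_mul_nonneg_left (by simpa using hB) hr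
  | succ m =>
    rw [Nat.add_sub_cancel, pow_succ', ← mul_assoc]
    gcongr

theorem inner_mul_self_right (q w : ℂ) : inner ℝ w (q * w) = q.re * ‖w‖ ^ 2 := by
  rw [Complex.inner, mul_assoc, Complex.mul_conj, Complex.re_mul_ofReal, Complex.normSq_eq_norm_sq]

/-- The pair `(w, w')` solves `w'' = q w` on the real line, with `w'` the derivative of `w`. It
describes the restriction of a solution of the Schrödinger equation to a ray. -/
structure IsRaySol (q w w' : ℝ → ℂ) : Prop where
  hasDerivAt : ∀ r, HasDerivAt w (w' r) r
  hasDerivAt_deriv : ∀ r, HasDerivAt w' (q r * w r) r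

/-- The energy `‖w'‖² + r^d ‖w‖²` of a solution of `w'' = q w`, adapted to a potential `q` of size
`r^d`. -/
noncomputable def rayEnergy (d : ℕ) (w w' : ℝ → ℂ) (r : ℝ) : ℝ :=
  ‖w' r‖ ^ 2 + r ^ d * ‖w r‖ ^ 2

theorem rayEnergy_nonneg (d : ℕ) (w w' : ℝ → ℂ) {r : ℝ} (hr : 0 ≤ r) : 0 ≤ rayEnergy d w w' r := by
  rw [rayEnergy]
  positivity

namespace IsRaySol

variable {q w w' v v' : ℝ → ℂ} {R : ℝ}

theorem continuous (hw : IsRaySol q w w') : Continuous w :=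
  continuous_iff_continuousAt.2 fun r => (hw.hasDerivAt r).continuousAt

theorem sub_const_mul (hw : IsRaySol q w w') (hv : IsRaySol q v v') (c : ℂ) :
    IsRaySol q (fun r => w r - c * v r) (fun r => w' r - c * v' r) where
  hasDerivAt r := (hw.hasDerivAt r).sub ((hv.hasDerivAt r).const_mul c)
  hasDerivAt_deriv r :=
    ((hw.hasDerivAt_deriv r).sub ((hv.hasDerivAt_deriv r).const_mul c)).congr_deriv (by ring)

theorem hasDerivAt_norm_sq (hw : IsRaySol q w w') (r : ℝ) :
    HasDerivAt (fun r => ‖w r‖ ^ 2) (2 * inner ℝ (w r) (w' r)) r :=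
  (hw.hasDerivAt r).norm_sq

theorem hasDerivAt_inner (hw : IsRaySol q w w') (r : ℝ) :
    HasDerivAt (fun r => inner ℝ (w r) (w' r)) ((q r).re * ‖w r‖ ^ 2 + ‖w' r‖ ^ 2) r := by
  simpa only [inner_mul_self_right, real_inner_self_eq_norm_sq] using
    (hw.hasDerivAt r).inner ℝ (hw.hasDerivAt_deriv r)

section Comparison

variable {φ k k' : ℝ → ℝ}

/-- Sturm comparison of `‖w‖²` with `exp (-φ)`, through the factorization
`D² - k² + k' = (D - k) (D + k)` where `k = φ'`: both factors have a sign, since `‖w‖²` and its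
derivative vanish at `t`. -/
theorem antitoneOn_norm_sq_mul_exp_of_eq_zero (hw : IsRaySol q w w') {t : ℝ}
    (hφ : ∀ r ∈ Set.Icc R t, HasDerivAt φ (k r) r)
    (hk : ∀ r ∈ Set.Icc R t, HasDerivAt k (k' r) r)
    (hq : ∀ r ∈ Set.Icc R t, k r ^ 2 ≤ 2 * (q r).re + k' r) (hwt : w t = 0) :
    AntitoneOn (fun r => ‖w r‖ ^ 2 * Real.exp (φ r)) (Set.Icc R t) := by
  have hmono : MonotoneOn (fun r =>
      (2 * inner ℝ (w r) (w' r) + k r * ‖w r‖ ^ 2) * Real.exp (-φ r)) (Set.Icc R t) := by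
    refine monotoneOn_mul_exp (k := fun r => -k r) (convex_Icc R t)
      (fun r hr => ((hw.hasDerivAt_inner r).const_mul 2).add
        ((hk r hr).mul (hw.hasDerivAt_norm_sq r)))
      (fun r hr => (hφ r hr).neg) (fun r hr => ?_)
    have : 0 ≤ (2 * (q r).re + k' r - k r ^ 2) * ‖w r‖ ^ 2 + 2 * ‖w' r‖ ^ 2 := by
      have := sub_nonneg.2 (hq r hr)
      positivity
    linarith
  refine antitoneOn_mul_exp (convex_Icc R t) (fun r _ => hw.hasDerivAt_norm_sq r) hφ
    (fun r hr => nonpos_of_mul_nonpos_left ?_ (Real.exp_pos (-φ r)))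
  simpa [hwt] using hmono hr (Set.right_mem_Icc.2 (hr.1.trans hr.2)) hr.2

/-- If `w` is dominated by `v`, it is the limit of the solutions `w - (w t / v t) v`, which vanish
at `t → ∞`. -/
theorem antitoneOn_norm_sq_mul_exp_of_isLittleO (hw : IsRaySol q w w') (hv : IsRaySol q v v')
    {L : Filter ℝ} [L.NeBot] (hL : L ≤ atTop) (hwv : w =o[L] v)
    (hφ : ∀ r ≥ R, HasDerivAt φ (k r) r) (hk : ∀ r ≥ R, HasDerivAt k (k' r) r)
    (hq : ∀ r ≥ R, k r ^ 2 ≤ 2 * (q r).re + k' r) :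
    AntitoneOn (fun r => ‖w r‖ ^ 2 * Real.exp (φ r)) (Set.Ici R) := by
  obtain ⟨c, hc, hwc⟩ := isLittleO_iff_exists_eq_mul.1 hwv
  have hlim (r : ℝ) : Tendsto (fun t => ‖w r - c t * v r‖ ^ 2 * Real.exp (φ r)) L
      (𝓝 (‖w r‖ ^ 2 * Real.exp (φ r))) := by
    simpa using (((hc.mul_const (v r)).const_sub (w r)).norm.pow 2).mul_const (Real.exp (φ r))
  intro a ha b _ hab
  refine le_of_tendsto_of_tendsto (hlim b) (hlim a) ?_
  filter_upwards [hwc, hL (eventually_ge_atTop b)] with t hwt hbt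
  exact (hw.sub_const_mul hv (c t)).antitoneOn_norm_sq_mul_exp_of_eq_zero
    (fun r hr => hφ r hr.1) (fun r hr => hk r hr.1) (fun r hr => hq r hr.1) (sub_eq_zero.2 hwt)
    ⟨ha, hab.trans hbt⟩ ⟨le_trans ha hab, hbt⟩ hab

end Comparison

theorem exists_norm_le_of_isLittleO (hw : IsRaySol q w w') (hv : IsRaySol q v v')
    {L : Filter ℝ} [L.NeBot] (hL : L ≤ atTop) (hwv : w =o[L] v) (d : ℕ) {a : ℝ} (ha : 0 ≤ a)
    (hq : ∀ᶠ r : ℝ in atTop, a ^ 2 * r ^ d ≤ 2 * (q r).re) :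
    ∃ C, ∀ r ≥ 0, ‖w r‖ ≤ C * Real.exp (-(a / (d + 2) * r ^ ((d : ℝ) / 2 + 1))) := by
  obtain ⟨R, hR⟩ := eventually_atTop.1 (hq.and (eventually_gt_atTop 0))
  have hanti := hw.antitoneOn_norm_sq_mul_exp_of_isLittleO hv hL hwv (R := R)
    (k := fun r => a * r ^ ((d : ℝ) / 2)) (k' := fun r => a * (d / 2 * r ^ ((d : ℝ) / 2 - 1)))
    (fun r _ => (hasDerivAt_const_mul_rpow_half_add_one d (a / (d / 2 + 1))).congr_deriv
      (by field_simp))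
    (fun r hr => (Real.hasDerivAt_rpow_const (Or.inl (hR r hr).2.ne')).const_mul a)
    (fun r hr => by
      obtain ⟨hqr, hr0⟩ := hR r hr
      rw [mul_pow, rpow_half_sq d hr0.le]
      exact hqr.trans (le_add_of_nonneg_right (by positivity)))
  set g : ℝ → ℝ := fun r => ‖w r‖ * Real.exp (a / (d + 2) * r ^ ((d : ℝ) / 2 + 1)) with hg
  have hg_sq (r : ℝ) : g r ^ 2 =
      ‖w r‖ ^ 2 * Real.exp (a / (d / 2 + 1) * r ^ ((d : ℝ) / 2 + 1)) := by
    rw [hg, mul_pow, ← Real.exp_nat_mul]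
    congr 2
    field_simp
    push_cast
    ring
  have hcont : Continuous g := hw.continuous.norm.mul (Real.continuous_exp.comp
    (continuous_const.mul (Real.continuous_rpow_const (by positivity))))
  obtain ⟨C, hC⟩ := (isCompact_Icc (a := (0 : ℝ)) (b := R)).exists_bound_of_continuousOn
    hcont.continuousOn
  have hR0 : 0 ≤ R := (hR R le_rfl).2.le
  have hgC (r : ℝ) (hr : 0 ≤ r) : g r ≤ C := by
    rcases le_total r R with hrR | hRr
    · exact (le_abs_self _).trans (hC r ⟨hr, hrR⟩)
    · refine le_trans ?_ ((le_abs_self _).trans (hC R ⟨hR0, le_rfl⟩))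
      refine (pow_le_pow_iff_left₀ (by positivity) (by positivity) two_ne_zero).1 ?_
      simpa only [hg_sq] using hanti Set.self_mem_Ici hRr hRr
  refine ⟨C, fun r hr => ?_⟩
  rw [Real.exp_neg, ← div_eq_mul_inv, le_div_iff₀ (Real.exp_pos _)]
  exact hgC r hr

section Energy

theorem hasDerivAt_rayEnergy (hw : IsRaySol q w w') (d : ℕ) (r : ℝ) :
    HasDerivAt (rayEnergy d w w')
      (2 * inner ℝ (w' r) ((q r + r ^ d) * w r) + d * r ^ (d - 1) * ‖w r‖ ^ 2) r := by
  refine ((hw.hasDerivAt_deriv r).norm_sq.add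
    ((hasDerivAt_pow d r).mul (hw.hasDerivAt_norm_sq r))).congr_deriv ?_
  have hsplit : (q r + (r : ℂ) ^ d) * w r = q r * w r + (r ^ d : ℝ) • w r := by
    rw [Complex.real_smul]
    push_cast
    ring
  rw [hsplit, inner_add_right, real_inner_smul_right, real_inner_comm (w r) (w' r)]
  ring

theorem abs_deriv_rayEnergy_le (hw : IsRaySol q w w') (d : ℕ) {B r : ℝ} (hr : 1 ≤ r)
    (hB : d ≤ B * r) (hq : ‖q r + r ^ d‖ ≤ B * r ^ d) :
    |deriv (rayEnergy d w w') r| ≤ 2 * B * r ^ ((d : ℝ) / 2) * rayEnergy d w w' r := by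
  have hr0 : 0 < r := by linarith
  have hB0 : 0 ≤ B := nonneg_of_mul_nonneg_left ((Nat.cast_nonneg d).trans hB) hr0
  set s := r ^ ((d : ℝ) / 2)
  have hs1 : 1 ≤ s := Real.one_le_rpow hr (by positivity)
  have hs_sq : s ^ 2 = r ^ d := rpow_half_sq d hr0.le
  have hinner : |2 * inner ℝ (w' r) ((q r + r ^ d) * w r)| ≤ B * s * rayEnergy d w w' r := by
    rw [abs_mul, abs_two]
    calc 2 * |inner ℝ (w' r) ((q r + r ^ d) * w r)|
        ≤ 2 * (‖w' r‖ * (B * r ^ d * ‖w r‖)) := by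
          gcongr
          refine (abs_real_inner_le_norm _ _).trans ?_
          rw [norm_mul]
          gcongr
      _ = B * s * (2 * ‖w' r‖ * (s * ‖w r‖)) := by rw [← hs_sq]; ring
      _ ≤ B * s * (‖w' r‖ ^ 2 + (s * ‖w r‖) ^ 2) := by
          gcongr
          exact two_mul_le_add_sq _ _
      _ = B * s * rayEnergy d w w' r := by rw [rayEnergy, ← hs_sq]; ring
  have hweight : |d * r ^ (d - 1) * ‖w r‖ ^ 2| ≤ B * s * rayEnergy d w w' r := by
    rw [abs_of_nonneg (by positivity)]
    calc d * r ^ (d - 1) * ‖w r‖ ^ 2 ≤ B * r ^ d * ‖w r‖ ^ 2 :=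
          mul_le_mul_of_nonneg_right (natCast_mul_pow_pred_le hr0 hB) (by positivity)
      _ ≤ B * rayEnergy d w w' r := by
          rw [mul_assoc]
          gcongr
          exact le_add_of_nonneg_left (by positivity)
      _ ≤ B * s * rayEnergy d w w' r := by
          rw [rayEnergy]
          gcongr
          exact le_mul_of_one_le_right hB0 hs1
  rw [(hw.hasDerivAt_rayEnergy d r).deriv]
  linarith [abs_add_le (2 * inner ℝ (w' r) ((q r + r ^ d) * w r)) (d * r ^ (d - 1) * ‖w r‖ ^ 2)]

theorem antitoneOn_rayEnergy_mul_exp (hw : IsRaySol q w w') (d : ℕ) {B : ℝ} (hR : 1 ≤ R)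
    (hB : d ≤ B * R) (hq : ∀ r ≥ R, ‖q r + r ^ d‖ ≤ B * r ^ d) :
    AntitoneOn (fun r => rayEnergy d w w' r *
      Real.exp (-(2 * B / (d / 2 + 1)) * r ^ ((d : ℝ) / 2 + 1))) (Set.Ici R) := by
  have hB0 : 0 ≤ B :=
    nonneg_of_mul_nonneg_left ((Nat.cast_nonneg d).trans hB) (zero_lt_one.trans_le hR)
  refine antitoneOn_mul_exp (convex_Ici R)
    (fun r _ => (hw.hasDerivAt_rayEnergy d r).differentiableAt.hasDerivAt)
    (fun r _ => hasDerivAt_const_mul_rpow_half_add_one d _) (fun r hr => ?_)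
  have h := le_of_abs_le (hw.abs_deriv_rayEnergy_le d (hR.trans hr)
    (hB.trans (mul_le_mul_of_nonneg_left hr hB0)) (hq r hr))
  field_simp
  linarith

theorem monotoneOn_rayEnergy_mul_exp (hw : IsRaySol q w w') (d : ℕ) {B : ℝ} (hR : 1 ≤ R)
    (hB : d ≤ B * R) (hq : ∀ r ≥ R, ‖q r + r ^ d‖ ≤ B * r ^ d) :
    MonotoneOn (fun r => rayEnergy d w w' r *
      Real.exp (2 * B / (d / 2 + 1) * r ^ ((d : ℝ) / 2 + 1))) (Set.Ici R) := by
  have hB0 : 0 ≤ B :=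
    nonneg_of_mul_nonneg_left ((Nat.cast_nonneg d).trans hB) (zero_lt_one.trans_le hR)
  refine monotoneOn_mul_exp (convex_Ici R)
    (fun r _ => (hw.hasDerivAt_rayEnergy d r).differentiableAt.hasDerivAt)
    (fun r _ => hasDerivAt_const_mul_rpow_half_add_one d _) (fun r hr => ?_)
  have h := neg_le_of_abs_le (hw.abs_deriv_rayEnergy_le d (hR.trans hr)
    (hB.trans (mul_le_mul_of_nonneg_left hr hB0)) (hq r hr))
  field_simp
  linarith

theorem norm_le_mul_exp (hw : IsRaySol q w w') (d : ℕ) {B r : ℝ} (hR : 1 ≤ R)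
    (hB : d ≤ B * R) (hq : ∀ r ≥ R, ‖q r + r ^ d‖ ≤ B * r ^ d) (hr : R ≤ r) :
    ‖w r‖ ≤ √(rayEnergy d w w' R) * Real.exp (B / (d / 2 + 1) * r ^ ((d : ℝ) / 2 + 1)) := by
  have hB0 : 0 ≤ B :=
    nonneg_of_mul_nonneg_left ((Nat.cast_nonneg d).trans hB) (zero_lt_one.trans_le hR)
  have hER : 0 ≤ rayEnergy d w w' R := rayEnergy_nonneg d w w' (by linarith)
  set x := B / (d / 2 + 1) * r ^ ((d : ℝ) / 2 + 1)
  have hanti : rayEnergy d w w' r * Real.exp (-(2 * x)) ≤ rayEnergy d w w' R :=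
    calc rayEnergy d w w' r * Real.exp (-(2 * x))
        = rayEnergy d w w' r * Real.exp (-(2 * B / (d / 2 + 1)) * r ^ ((d : ℝ) / 2 + 1)) := by
          congr 2
          ring
      _ ≤ rayEnergy d w w' R * Real.exp (-(2 * B / (d / 2 + 1)) * R ^ ((d : ℝ) / 2 + 1)) :=
          hw.antitoneOn_rayEnergy_mul_exp d hR hB hq Set.self_mem_Ici hr hr
      _ ≤ rayEnergy d w w' R := by
          refine mul_le_of_le_one_right hER (Real.exp_le_one_iff.2 ?_)
          rw [neg_mul]
          exact neg_nonpos.2 (by positivity)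
  refine (pow_le_pow_iff_left₀ (norm_nonneg _) (by positivity) two_ne_zero).1 ?_
  calc ‖w r‖ ^ 2 ≤ r ^ d * ‖w r‖ ^ 2 :=
        le_mul_of_one_le_left (by positivity) (one_le_pow₀ (hR.trans hr))
    _ ≤ rayEnergy d w w' r := le_add_of_nonneg_left (by positivity)
    _ ≤ rayEnergy d w w' R * Real.exp (2 * x) := by
        rwa [Real.exp_neg, ← div_eq_mul_inv, div_le_iff₀ (Real.exp_pos _)] at hanti
    _ = (√(rayEnergy d w w' R) * Real.exp x) ^ 2 := by
        rw [mul_pow, Real.sq_sqrt hER, ← Real.exp_nat_mul, Nat.cast_ofNat]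

end Energy

theorem norm_deriv_le (hw : IsRaySol q w w') {A B r : ℝ}
    (hA : ∀ x ∈ Set.Icc r (r + 1), ‖w x‖ ≤ A) (hB : ∀ x ∈ Set.Icc r (r + 1), ‖q x‖ ≤ B) :
    ‖w' r‖ ≤ 2 * A + B * A := by
  have hconv : Convex ℝ (Set.Icc r (r + 1)) := convex_Icc r (r + 1)
  have hl : r ∈ Set.Icc r (r + 1) := ⟨le_rfl, by linarith⟩
  have hr : r + 1 ∈ Set.Icc r (r + 1) := ⟨by linarith, le_rfl⟩
  have hB0 : 0 ≤ B := (norm_nonneg _).trans (hB r hl)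
  have hA0 : 0 ≤ A := (norm_nonneg _).trans (hA r hl)
  have hvar : ∀ x ∈ Set.Icc r (r + 1), ‖w' x - w' r‖ ≤ B * A := fun x hx => by
    refine (hconv.norm_image_sub_le_of_norm_hasDerivWithin_le (C := B * A)
      (fun x _ => (hw.hasDerivAt_deriv x).hasDerivWithinAt)
      (fun x hx => by rw [norm_mul]; gcongr; exacts [hB x hx, hA x hx]) hl hx).trans
      (mul_le_of_le_one_right (by positivity) ?_)
    rw [Real.norm_of_nonneg (by linarith [hx.1])]
    linarith [hx.2]
  have htaylor : ‖w (r + 1) - w r - w' r‖ ≤ B * A := by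
    have := hconv.norm_image_sub_le_of_norm_hasDerivWithin_le
      (f := fun x => w x - (x - r) • w' r) (f' := fun x => w' x - w' r)
      (fun x _ => ((hw.hasDerivAt x).sub (by
        simpa using ((hasDerivAt_id x).sub_const r).smul_const (w' r))).hasDerivWithinAt)
      hvar hl hr
    simpa [sub_right_comm] using this
  calc ‖w' r‖ = ‖w (r + 1) - w r - (w (r + 1) - w r - w' r)‖ := by rw [sub_sub_cancel]
    _ ≤ ‖w (r + 1)‖ + ‖w r‖ + ‖w (r + 1) - w r - w' r‖ :=
        (norm_sub_le _ _).trans (by gcongr; exact norm_sub_le _ _)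
    _ ≤ 2 * A + B * A := by linarith [hA r hl, hA (r + 1) hr]

section Oscillatory

variable {d : ℕ} {c C : ℝ}

theorem deriv_isBigO (hw : IsRaySol q w w') (hq : q =O[atTop] fun r : ℝ => r ^ d) (hc : 0 ≤ c)
    (hC : ∀ r ≥ 0, ‖w r‖ ≤ C * Real.exp (-(c * r ^ ((d : ℝ) / 2 + 1)))) :
    w' =O[atTop] fun r : ℝ => r ^ d * Real.exp (-(c * r ^ ((d : ℝ) / 2 + 1))) := by
  obtain ⟨K, hK, hqK⟩ := hq.exists_pos
  obtain ⟨R, hR⟩ := eventually_atTop.1 hqK.bound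
  have hC0 : 0 ≤ C :=
    nonneg_of_mul_nonneg_left ((norm_nonneg _).trans (hC 0 le_rfl)) (Real.exp_pos _)
  refine IsBigO.of_bound (2 * C + K * 2 ^ d * C) ?_
  filter_upwards [eventually_ge_atTop R, eventually_ge_atTop 1] with r hRr hr
  have hr0 : 0 ≤ r := by linarith
  set x := Real.exp (-(c * r ^ ((d : ℝ) / 2 + 1)))
  have hw_le : ∀ t ∈ Set.Icc r (r + 1), ‖w t‖ ≤ C * x := fun t ht =>
    (hC t (hr0.trans ht.1)).trans (by simp only [x]; gcongr; exact ht.1)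
  have hq_le : ∀ t ∈ Set.Icc r (r + 1), ‖q t‖ ≤ K * (2 * r) ^ d := fun t ht => by
    have ht0 : 0 ≤ t := hr0.trans ht.1
    refine (hR t (hRr.trans ht.1)).trans ?_
    rw [norm_pow, Real.norm_of_nonneg ht0]
    gcongr
    linarith [ht.2]
  rw [Real.norm_of_nonneg (by positivity)]
  calc ‖w' r‖ ≤ 2 * (C * x) + K * (2 * r) ^ d * (C * x) := hw.norm_deriv_le hw_le hq_le
    _ ≤ 2 * (C * x) * r ^ d + K * (2 * r) ^ d * (C * x) := by
        refine add_le_add_left (le_mul_of_one_le_right (by positivity) (one_le_pow₀ hr)) _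
    _ = (2 * C + K * 2 ^ d * C) * (r ^ d * x) := by ring

theorem tendsto_rayEnergy_mul_exp (hw : IsRaySol q w w') (hq : q =O[atTop] fun r : ℝ => r ^ d)
    (hc : 0 < c) (hC : ∀ r ≥ 0, ‖w r‖ ≤ C * Real.exp (-(c * r ^ ((d : ℝ) / 2 + 1)))) :
    Tendsto (fun r => rayEnergy d w w' r * Real.exp (c * r ^ ((d : ℝ) / 2 + 1))) atTop (𝓝 0) := by
  have hw_bigO : w =O[atTop] fun r : ℝ => Real.exp (-(c * r ^ ((d : ℝ) / 2 + 1))) :=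
    IsBigO.of_bound C <| (eventually_ge_atTop 0).mono fun r hr => by
      simpa only [Real.norm_of_nonneg (Real.exp_pos _).le] using hC r hr
  have hexp (r : ℝ) : Real.exp (-(c * r ^ ((d : ℝ) / 2 + 1))) ^ 2 *
      Real.exp (c * r ^ ((d : ℝ) / 2 + 1)) = Real.exp (-(c * r ^ ((d : ℝ) / 2 + 1))) := by
    rw [← Real.exp_nat_mul, ← Real.exp_add]
    congr 1
    push_cast
    ring
  have hlim (k : ℕ) := tendsto_pow_mul_exp_neg_mul_rpow k hc (p := (d : ℝ) / 2 + 1) (by positivity)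
  have hderiv : Tendsto (fun r => ‖w' r‖ ^ 2 * Real.exp (c * r ^ ((d : ℝ) / 2 + 1))) atTop (𝓝 0) :=
    (((hw.deriv_isBigO hq hc.le hC).norm_left.pow 2).mul (isBigO_refl _ _)).trans_tendsto <|
      (hlim (d * 2)).congr fun r => by rw [mul_pow, mul_assoc, hexp, pow_mul]
  have hvalue : Tendsto (fun r => r ^ d * ‖w r‖ ^ 2 * Real.exp (c * r ^ ((d : ℝ) / 2 + 1)))
      atTop (𝓝 0) :=
    (((isBigO_refl (fun r : ℝ => r ^ d) _).mul (hw_bigO.norm_left.pow 2)).mul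
      (isBigO_refl _ _)).trans_tendsto <| (hlim d).congr fun r => by rw [mul_assoc, hexp]
  simpa only [rayEnergy, add_mul, add_zero] using hderiv.add hvalue

/-- For every `c > 0` the energy times `exp (c r ^ (d / 2 + 1))` is eventually monotone, so it can
tend to zero only if it is eventually nonpositive. -/
theorem eventually_eq_zero_of_norm_le (hw : IsRaySol q w w')
    (hq : (fun r => q r + r ^ d) =o[atTop] fun r : ℝ => r ^ d) (hc : 0 < c)
    (hC : ∀ r ≥ 0, ‖w r‖ ≤ C * Real.exp (-(c * r ^ ((d : ℝ) / 2 + 1)))) :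
    ∀ᶠ r in atTop, w r = 0 := by
  set B : ℝ := c * (d / 2 + 1) / 2 with hB
  have hB0 : 0 < B := by positivity
  have hBc : 2 * B / (d / 2 + 1) = c := by rw [hB]; field_simp
  have hq_bigO : q =O[atTop] fun r : ℝ => r ^ d := by
    have hpow : (fun r : ℝ => (r : ℂ) ^ d) =O[atTop] fun r : ℝ => r ^ d :=
      isBigO_of_le _ fun r => by simp
    simpa using hq.isBigO.sub hpow
  obtain ⟨R, hR⟩ := eventually_atTop.1 (hq.def hB0)
  have hmono {S : ℝ} (hRS : R ≤ S) (hS : 1 ≤ S) (hdS : d / B ≤ S) :=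
    hw.monotoneOn_rayEnergy_mul_exp d hS ((div_le_iff₀' hB0).1 hdS) fun r hr => by
      have hr0 : 0 ≤ r := by linarith [show S ≤ r from hr]
      simpa [abs_of_nonneg hr0] using hR r (hRS.trans hr)
  filter_upwards [eventually_ge_atTop R, eventually_ge_atTop 1, eventually_ge_atTop (d / B)]
    with r hRr hr hdr
  have henergy : rayEnergy d w w' r ≤ 0 := by
    refine nonpos_of_mul_nonpos_left (ge_of_tendsto (hw.tendsto_rayEnergy_mul_exp hq_bigO hc hC) ?_)
      (Real.exp_pos (c * r ^ ((d : ℝ) / 2 + 1)))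
    filter_upwards [eventually_ge_atTop r] with t hrt
    simpa only [hBc] using hmono hRr hr hdr Set.self_mem_Ici hrt hrt
  have hweight : 0 < r ^ d := by positivity
  have : r ^ d * ‖w r‖ ^ 2 ≤ 0 := (le_add_of_nonneg_left (by positivity)).trans henergy
  simpa using nonpos_of_mul_nonpos_right this hweight

end Oscillatory

end IsRaySol

/-- `y` is an entire solution of the Schrödinger equation `y'' = Q y` with potential `Q`; `IsSol` is
the case `Q = P_α - λ`. -/
def IsEntireSol_s16 (Q y : ℂ → ℂ) : Prop :=
  Differentiable ℂ y ∧ ∀ z, deriv (deriv y) z = Q z * y z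

/-- The potential governing the restriction `r ↦ y (r e)` of a solution of `y'' = Q y` to the ray
spanned by `e`. -/
noncomputable def rayPotential (Q : ℂ → ℂ) (e : ℂ) (r : ℝ) : ℂ :=
  e ^ 2 * Q (r * e)

theorem tendsto_ofReal_mul_cobounded {e : ℂ} (he : e ≠ 0) :
    Tendsto (fun r : ℝ => (r : ℂ) * e) atTop (cobounded ℂ) := by
  refine tendsto_norm_atTop_iff_cobounded.1 ?_
  simp only [norm_mul, Complex.norm_real]
  exact tendsto_norm_atTop_atTop.atTop_mul_const (norm_pos_iff.2 he)

theorem rayPotential_sub_isLittleO {Q : ℂ → ℂ} {d : ℕ} (hQ : Q ~[cobounded ℂ] fun z => z ^ d)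
    {e : ℂ} (he : e ≠ 0) :
    (fun r => rayPotential Q e r - e ^ (d + 2) * r ^ d) =o[atTop] fun r : ℝ => r ^ d := by
  have hpow : (fun r : ℝ => ((r : ℂ) * e) ^ d) =O[atTop] fun r : ℝ => r ^ d :=
    IsBigO.of_bound (‖e‖ ^ d) (Eventually.of_forall fun r => by simp [mul_pow, mul_comm])
  refine (((hQ.isLittleO.comp_tendsto (tendsto_ofReal_mul_cobounded he)).trans_isBigO
    hpow).const_mul_left (e ^ 2)).congr_left fun r => ?_
  simp only [rayPotential, Function.comp_apply, Pi.sub_apply]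
  ring

theorem norm_rayPotential_add_le {Q : ℂ → ℂ} {d : ℕ} {e : ℂ} (he : ‖e‖ = 1) {K r : ℝ}
    (hr : 0 ≤ r) (hQ : ‖Q (r * e)‖ ≤ K * r ^ d) :
    ‖rayPotential Q e r + r ^ d‖ ≤ (K + 1) * r ^ d := by
  refine (norm_add_le _ _).trans ?_
  rw [rayPotential, norm_mul, norm_pow, he, one_pow, one_mul, norm_pow, Complex.norm_real,
    Real.norm_of_nonneg hr, add_mul, one_mul]
  gcongr

namespace IsEntireSol_s16

variable {Q u v : ℂ → ℂ} {d : ℕ}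

theorem differentiable_deriv (hu : IsEntireSol_s16 Q u) : Differentiable ℂ (deriv u) :=
  fun z => (hu.1.analyticAt z).deriv.differentiableAt

theorem sub_const_mul (hu : IsEntireSol_s16 Q u) (hv : IsEntireSol_s16 Q v) (c : ℂ) :
    IsEntireSol_s16 Q (fun z => u z - c * v z) := by
  have hderiv : deriv (fun z => u z - c * v z) = fun z => deriv u z - c * deriv v z :=
    funext fun z => ((hu.1 z).hasDerivAt.sub ((hv.1 z).hasDerivAt.const_mul c)).deriv
  refine ⟨hu.1.sub (hv.1.const_mul c), fun z => ?_⟩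
  rw [hderiv]
  refine (((hu.differentiable_deriv z).hasDerivAt.sub
    ((hv.differentiable_deriv z).hasDerivAt.const_mul c)).congr_deriv ?_).deriv
  rw [hu.2, hv.2]
  ring

theorem isRaySol (hu : IsEntireSol_s16 Q u) (e : ℂ) :
    IsRaySol (rayPotential Q e) (fun r => u (r * e)) (fun r => e * deriv u (r * e)) := by
  have hray (r : ℝ) : HasDerivAt (fun r : ℝ => (r : ℂ) * e) e r := by
    simpa using (Complex.ofRealCLM.hasDerivAt (x := r)).mul_const e
  refine ⟨fun r => ((hu.1 _).hasDerivAt.comp r (hray r)).congr_deriv (mul_comm _ _), fun r =>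
    (((hu.differentiable_deriv _).hasDerivAt.comp r (hray r)).const_mul e).congr_deriv ?_⟩
  rw [hu.2, rayPotential]
  ring

theorem exists_norm_le_of_isLittleO (hQ : Q ~[cobounded ℂ] fun z => z ^ d) (hu : IsEntireSol_s16 Q u)
    (hv : IsEntireSol_s16 Q v) {e : ℂ} (he : e ≠ 0) {a : ℝ} (ha : 0 ≤ a)
    (hae : a ^ 2 < 2 * (e ^ (d + 2)).re) {L : Filter ℝ} [L.NeBot] (hL : L ≤ atTop)
    (huv : (fun r : ℝ => u (r * e)) =o[L] fun r : ℝ => v (r * e)) :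
    ∃ C, ∀ r : ℝ, 0 ≤ r →
      ‖u (r * e)‖ ≤ C * Real.exp (-(a / (d + 2) * r ^ ((d : ℝ) / 2 + 1))) := by
  refine (hu.isRaySol e).exists_norm_le_of_isLittleO (hv.isRaySol e) hL huv d ha ?_
  filter_upwards [(rayPotential_sub_isLittleO hQ he).def (half_pos (sub_pos.2 hae)),
    eventually_ge_atTop 0] with r hr hr0
  have hre := (abs_le.1 ((Complex.abs_re_le_norm _).trans hr)).1
  rw [← Complex.ofReal_pow, Complex.sub_re, Complex.re_mul_ofReal,
    Real.norm_of_nonneg (by positivity)] at hre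
  linarith

theorem continuous_sqrt_rayEnergy (hu : IsEntireSol_s16 Q u) (d : ℕ) (R : ℝ) :
    Continuous fun e : ℂ =>
      √(rayEnergy d (fun r => u (r * e)) (fun r => e * deriv u (r * e)) R) := by
  have := hu.1.continuous
  have := hu.differentiable_deriv.continuous
  unfold rayEnergy
  fun_prop

theorem exists_norm_le_mul_exp (hQ : Q =O[cobounded ℂ] fun z => z ^ d) (hu : IsEntireSol_s16 Q u) :
    ∃ M b, 0 ≤ b ∧ ∀ z, ‖u z‖ ≤ M * Real.exp (b * ‖z‖ ^ ((d : ℝ) / 2 + 1)) := by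
  obtain ⟨K, hK, hQK⟩ := hQ.exists_pos
  obtain ⟨R₀, -, hR₀⟩ := (hasBasis_cobounded_norm (E := ℂ)).eventually_iff.1 hQK.bound
  set R := max R₀ 1
  have hR1 : 1 ≤ R := le_max_right _ _
  set B : ℝ := K + 1 + d
  have hBR : d ≤ B * R := by
    have : d ≤ B := le_add_of_nonneg_left (by positivity)
    exact this.trans (le_mul_of_one_le_right (by positivity) hR1)
  have hQB {e : ℂ} (he : ‖e‖ = 1) : ∀ r ≥ R, ‖rayPotential Q e r + r ^ d‖ ≤ B * r ^ d :=
    fun r hr => by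
      have hr0 : 0 ≤ r := by linarith [show R ≤ r from hr]
      refine (norm_rayPotential_add_le he hr0 ?_).trans
        (mul_le_mul_of_nonneg_right (le_add_of_nonneg_right d.cast_nonneg) (by positivity))
      have hnorm : ‖(r : ℂ) * e‖ = r := by simp [he, abs_of_nonneg hr0]
      have hz : R₀ ≤ ‖(r : ℂ) * e‖ := hnorm.ge.trans' ((le_max_left _ _).trans hr)
      simpa only [norm_pow, hnorm] using hR₀ hz
  obtain ⟨M₁, hM₁⟩ := (isCompact_closedBall (0 : ℂ) R).exists_bound_of_continuousOn
    hu.1.continuous.continuousOn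
  obtain ⟨M₂, hM₂⟩ := (isCompact_sphere (0 : ℂ) 1).exists_bound_of_continuousOn
    (hu.continuous_sqrt_rayEnergy d R).continuousOn
  refine ⟨max M₁ M₂, B / (d / 2 + 1), by positivity, fun z => ?_⟩
  set x := B / (d / 2 + 1) * ‖z‖ ^ ((d : ℝ) / 2 + 1)
  rcases le_total ‖z‖ R with hz | hz
  · have hM : ‖u z‖ ≤ max M₁ M₂ := (hM₁ z (mem_closedBall_zero_iff.2 hz)).trans (le_max_left _ _)
    exact hM.trans (le_mul_of_one_le_right ((norm_nonneg _).trans hM)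
      (Real.one_le_exp (by positivity)))
  · obtain ⟨e, he, hze⟩ : ∃ e : ℂ, ‖e‖ = 1 ∧ ‖z‖ * e = z :=
      ⟨_, Complex.norm_exp_ofReal_mul_I _, Complex.norm_mul_exp_arg_mul_I z⟩
    calc ‖u z‖ = ‖u (‖z‖ * e)‖ := by rw [hze]
      _ ≤ √(rayEnergy d (fun r => u (r * e)) (fun r => e * deriv u (r * e)) R) * Real.exp x :=
          (hu.isRaySol e).norm_le_mul_exp d hR1 hBR (hQB he) hz
      _ ≤ max M₁ M₂ * Real.exp x := by
          gcongr
          exact (le_abs_self _).trans ((hM₂ e (mem_sphere_zero_iff_norm.2 he)).trans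
            (le_max_right _ _))

end IsEntireSol_s16

section PhragmenLindelofSector

theorem exp_mul_eq_rpow_exp (x p : ℝ) : Real.exp (p * x) = Real.exp x ^ p := by
  rw [← Real.exp_mul, mul_comm]

theorem exp_add_ofReal_mul_I (ζ : ℂ) (θ : ℝ) :
    Complex.exp (ζ + θ * I) = (Real.exp ζ.re : ℂ) * Complex.exp ((θ + ζ.im : ℝ) * I) := by
  rw [Complex.ofReal_exp, ← Complex.exp_add]
  congr 1
  apply Complex.ext <;> simp [add_comm]

theorem norm_exp_ofReal_mul_exp_le {c : ℝ} (hc : 0 ≤ c) (p : ℝ) (ζ : ℂ) :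
    ‖Complex.exp (c * Complex.exp (p * ζ))‖ ≤ Real.exp (c * Real.exp ζ.re ^ p) := by
  rw [Complex.norm_exp, ← exp_mul_eq_rpow_exp, Complex.re_ofReal_mul]
  gcongr
  exact (Complex.re_le_norm _).trans (by rw [Complex.norm_exp, Complex.re_ofReal_mul])

variable {u : ℂ → ℂ} {p b c M C δ θ : ℝ}

theorem norm_mul_exp_le_of_norm_le (hc : 0 ≤ c) {ζ : ℂ}
    (h : ‖u (Complex.exp (ζ + θ * I))‖ ≤ C * Real.exp (b * Real.exp ζ.re ^ p)) :
    ‖u (Complex.exp (ζ + θ * I)) * Complex.exp (c * Complex.exp (p * ζ))‖ ≤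
      C * Real.exp ((b + c) * Real.exp ζ.re ^ p) := by
  rw [norm_mul, add_mul, Real.exp_add, ← mul_assoc]
  exact mul_le_mul h (norm_exp_ofReal_mul_exp_le hc p ζ) (norm_nonneg _)
    ((norm_nonneg _).trans h)

/-- The Phragmén–Lindelöf principle for `u(z) exp (c z ^ p)` in a sector of half-opening `δ`, in the
logarithmic coordinate `ζ` centred at the direction `θ`. -/
theorem norm_mul_exp_le_of_sector (hu : Differentiable ℂ u) (hp : 0 ≤ p) (hb : 0 ≤ b)
    (hc : 0 ≤ c) (hδ : 0 < δ) (hpδ : p * (2 * δ) < Real.pi)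
    (hgrowth : ∀ z, ‖u z‖ ≤ M * Real.exp (b * ‖z‖ ^ p))
    (hl : ∀ r : ℝ, 0 ≤ r →
      ‖u (r * Complex.exp ((θ - δ : ℝ) * I))‖ ≤ C * Real.exp (-(c * r ^ p)))
    (hr : ∀ r : ℝ, 0 ≤ r →
      ‖u (r * Complex.exp ((θ + δ : ℝ) * I))‖ ≤ C * Real.exp (-(c * r ^ p)))
    {ζ : ℂ} (hζl : -δ ≤ ζ.im) (hζr : ζ.im ≤ δ) :
    ‖u (Complex.exp (ζ + θ * I)) * Complex.exp (c * Complex.exp (p * ζ))‖ ≤ C := by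
  have hside {ζ : ℂ} (h : ‖u (Real.exp ζ.re * Complex.exp ((θ + ζ.im : ℝ) * I))‖ ≤
      C * Real.exp (-(c * Real.exp ζ.re ^ p))) :
      ‖u (Complex.exp (ζ + θ * I)) * Complex.exp (c * Complex.exp (p * ζ))‖ ≤ C := by
    rw [← exp_add_ofReal_mul_I, ← neg_mul] at h
    simpa using norm_mul_exp_le_of_norm_le hc h
  have hpδ' : p < Real.pi / (δ - -δ) := by
    rwa [sub_neg_eq_add, ← two_mul, lt_div_iff₀ (by positivity)]
  refine PhragmenLindelof.horizontal_strip (a := -δ) (b := δ)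
    (f := fun ζ => u (Complex.exp (ζ + θ * I)) * Complex.exp (c * Complex.exp (p * ζ)))
    (Differentiable.diffContOnCl (by fun_prop)) ⟨p, hpδ', b + c, ?_⟩
    (fun ζ hζ => hside (by simpa only [hζ, ← sub_eq_add_neg] using hl _ (Real.exp_pos ζ.re).le))
    (fun ζ hζ => hside (by simpa only [hζ] using hr _ (Real.exp_pos ζ.re).le)) hζl hζr
  refine IsBigO.of_bound M (Eventually.of_forall fun ζ => ?_)
  have hM : 0 ≤ M :=
    nonneg_of_mul_nonneg_left ((norm_nonneg _).trans (hgrowth 0)) (Real.exp_pos _)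
  have hnorm : ‖Complex.exp (ζ + θ * I)‖ = Real.exp ζ.re := by simp [Complex.norm_exp]
  have hu_le := hgrowth (Complex.exp (ζ + θ * I))
  rw [hnorm] at hu_le
  refine (norm_mul_exp_le_of_norm_le hc hu_le).trans ?_
  rw [Real.norm_of_nonneg (Real.exp_pos _).le, ← exp_mul_eq_rpow_exp]
  gcongr
  exact le_abs_self _

theorem norm_le_exp_of_sector (hu : Differentiable ℂ u) (hp : 0 ≤ p) (hb : 0 ≤ b)
    (hc : 0 ≤ c) (hδ : 0 < δ) (hpδ : p * (2 * δ) < Real.pi)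
    (hgrowth : ∀ z, ‖u z‖ ≤ M * Real.exp (b * ‖z‖ ^ p))
    (hl : ∀ r : ℝ, 0 ≤ r →
      ‖u (r * Complex.exp ((θ - δ : ℝ) * I))‖ ≤ C * Real.exp (-(c * r ^ p)))
    (hr : ∀ r : ℝ, 0 ≤ r →
      ‖u (r * Complex.exp ((θ + δ : ℝ) * I))‖ ≤ C * Real.exp (-(c * r ^ p)))
    (r : ℝ) (hr0 : 0 ≤ r) :
    ‖u (r * Complex.exp (θ * I))‖ ≤ C * Real.exp (-(c * r ^ p)) := by
  rcases hr0.eq_or_lt with rfl | hr0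
  · simpa using hl 0 le_rfl
  have hpow : Complex.exp (p * (Real.log r : ℂ)) = (r ^ p : ℝ) := by
    rw [← Complex.ofReal_mul, ← Complex.ofReal_exp, exp_mul_eq_rpow_exp, Real.exp_log hr0]
  have h := norm_mul_exp_le_of_sector hu hp hb hc hδ hpδ hgrowth hl hr (ζ := (Real.log r : ℂ))
    (by simpa using hδ.le) (by simpa using hδ.le)
  rw [exp_add_ofReal_mul_I, Complex.ofReal_re, Complex.ofReal_im, add_zero, Real.exp_log hr0, hpow,
    norm_mul, ← Complex.ofReal_mul, Complex.norm_exp_ofReal, ← le_div_iff₀ (Real.exp_pos _)] at h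
  rwa [Real.exp_neg, ← div_eq_mul_inv]

end PhragmenLindelofSector

theorem eq_zero_of_eventually_ray_eq_zero {u : ℂ → ℂ} (hu : Differentiable ℂ u) {e : ℂ}
    (he : e ≠ 0) (h : ∀ᶠ r : ℝ in atTop, u (r * e) = 0) : u = 0 := by
  obtain ⟨R, hR⟩ := eventually_atTop.1 h
  have htend : Tendsto (fun r : ℝ => (r : ℂ) * e) (𝓝[>] R) (𝓝[≠] (R * e)) := by
    refine Tendsto.inf (Continuous.tendsto (by fun_prop) R) (tendsto_principal_principal.2 ?_)
    exact fun r hr => by simpa [he] using (ne_of_gt hr)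
  have hzero : ∀ᶠ r : ℝ in 𝓝[>] R, u (r * e) = 0 :=
    eventually_mem_nhdsWithin.mono fun r hr => hR r hr.le
  exact AnalyticOnNhd.eq_of_frequently_eq (fun z _ => hu.analyticAt z)
    (fun z _ => analyticAt_const) (htend.frequently hzero.frequently)

theorem re_exp_add_mul_I_pow {n : ℕ} {θ : ℝ} (hθ : Complex.exp (θ * I) ^ n = -1) (x : ℝ) :
    (Complex.exp ((θ + x : ℝ) * I) ^ n).re = -Real.cos (n * x) := by
  have hx : Complex.exp (x * I) ^ n = Complex.exp ((n * x : ℝ) * I) := by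
    rw [← Complex.exp_nat_mul]
    push_cast
    ring_nf
  rw [Complex.ofReal_add, add_mul, Complex.exp_add, mul_pow, hθ, hx, neg_one_mul, Complex.neg_re,
    Complex.exp_ofReal_mul_I_re]

namespace IsEntireSol_s16

variable {Q u v : ℂ → ℂ} {d : ℕ}

theorem eq_zero_of_norm_le_exp (hQ : Q ~[cobounded ℂ] fun z => z ^ d) (hu : IsEntireSol_s16 Q u)
    {e : ℂ} (he : e ^ (d + 2) = -1) {c C : ℝ} (hc : 0 < c)
    (hC : ∀ r : ℝ, 0 ≤ r → ‖u (r * e)‖ ≤ C * Real.exp (-(c * r ^ ((d : ℝ) / 2 + 1)))) :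
    u = 0 := by
  have he0 : e ≠ 0 := by
    rintro rfl
    simp at he
  refine eq_zero_of_eventually_ray_eq_zero hu.1 he0
    ((hu.isRaySol e).eventually_eq_zero_of_norm_le ?_ hc hC)
  simpa [he] using rayPotential_sub_isLittleO hQ he0

theorem eq_zero_of_norm_le_exp_of_sector (hQ : Q ~[cobounded ℂ] fun z => z ^ d)
    (hu : IsEntireSol_s16 Q u) {θ δ : ℝ} (hθ : Complex.exp (θ * I) ^ (d + 2) = -1) (hδ : 0 < δ)
    (hδ' : (d + 2) * δ < Real.pi) {c C₁ C₂ : ℝ} (hc : 0 < c)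
    (hl : ∀ r : ℝ, 0 ≤ r → ‖u (r * Complex.exp ((θ - δ : ℝ) * I))‖ ≤
      C₁ * Real.exp (-(c * r ^ ((d : ℝ) / 2 + 1))))
    (hr : ∀ r : ℝ, 0 ≤ r → ‖u (r * Complex.exp ((θ + δ : ℝ) * I))‖ ≤
      C₂ * Real.exp (-(c * r ^ ((d : ℝ) / 2 + 1)))) :
    u = 0 := by
  obtain ⟨M, b, hb, hgrowth⟩ := hu.exists_norm_le_mul_exp hQ.isBigO
  refine hu.eq_zero_of_norm_le_exp hQ hθ hc (C := max C₁ C₂)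
    (norm_le_exp_of_sector hu.1 (by positivity) hb hc.le hδ (by linarith) hgrowth
      (fun r hr0 => (hl r hr0).trans ?_) (fun r hr0 => (hr r hr0).trans ?_))
  · gcongr
    exact le_max_left _ _
  · gcongr
    exact le_max_right _ _

theorem eq_zero_of_isLittleO (hQ : Q ~[cobounded ℂ] fun z => z ^ d) (hu : IsEntireSol_s16 Q u)
    (hv : IsEntireSol_s16 Q v) {θ δ : ℝ} (hθ : Complex.exp (θ * I) ^ (d + 2) = -1) (hδ : 0 < δ)
    (hδl : Real.pi / 2 < (d + 2) * δ) (hδr : (d + 2) * δ < Real.pi)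
    {L₁ L₂ : Filter ℝ} [L₁.NeBot] [L₂.NeBot] (hL₁ : L₁ ≤ atTop) (hL₂ : L₂ ≤ atTop)
    (h₁ : (fun r : ℝ => u (r * Complex.exp ((θ - δ : ℝ) * I))) =o[L₁]
      fun r : ℝ => v (r * Complex.exp ((θ - δ : ℝ) * I)))
    (h₂ : (fun r : ℝ => u (r * Complex.exp ((θ + δ : ℝ) * I))) =o[L₂]
      fun r : ℝ => v (r * Complex.exp ((θ + δ : ℝ) * I))) :
    u = 0 := by
  set κ := -Real.cos ((d + 2 : ℕ) * δ) with hκ_def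
  have hκ : 0 < κ := by
    rw [hκ_def, neg_pos]
    push_cast
    exact Real.cos_neg_of_pi_div_two_lt_of_lt hδl (by linarith [Real.pi_pos])
  have hκ_sq : √κ ^ 2 < 2 * κ := by
    rw [Real.sq_sqrt hκ.le]
    linarith
  have hre_sub : (Complex.exp ((θ - δ : ℝ) * I) ^ (d + 2)).re = κ := by
    rw [sub_eq_add_neg, re_exp_add_mul_I_pow hθ, mul_neg, Real.cos_neg]
  obtain ⟨C₁, hC₁⟩ := hu.exists_norm_le_of_isLittleO hQ hv (Complex.exp_ne_zero _)
    (Real.sqrt_nonneg κ) (hre_sub ▸ hκ_sq) hL₁ h₁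
  obtain ⟨C₂, hC₂⟩ := hu.exists_norm_le_of_isLittleO hQ hv (Complex.exp_ne_zero _)
    (Real.sqrt_nonneg κ) (re_exp_add_mul_I_pow hθ δ ▸ hκ_sq) hL₂ h₂
  exact hu.eq_zero_of_norm_le_exp_of_sector hQ hθ hδ hδr (by positivity) hC₁ hC₂

end IsEntireSol_s16

section StokesSector

variable {n j : ℕ} {δ θ : ℝ}

theorem exp_two_mul_add_one_mul_pi_div_mul_I_pow (hn : n ≠ 0) (j : ℕ) :
    Complex.exp (((2 * j + 1) * Real.pi / n : ℝ) * I) ^ n = -1 := by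
  rw [← Complex.exp_nat_mul, ← Complex.exp_pi_mul_I, ← Complex.exp_periodic.nat_mul j (Real.pi * I)]
  congr 1
  push_cast
  field_simp
  ring

theorem dirIn_sub (hδ : 0 < δ) (hδn : δ < 2 * Real.pi / n) :
    DirIn n j ((2 * j + 1) * Real.pi / n - δ) := by
  have hcentre : (2 * j + 1) * Real.pi / n - δ - 2 * Real.pi * j / n = Real.pi / n - δ := by ring
  have hwidth : 2 * Real.pi / n = Real.pi / n + Real.pi / n := by ring
  rw [DirIn, hcentre, abs_lt]
  constructor <;> linarith

theorem dirIn_succ_add (hδ : 0 < δ) (hδn : δ < 2 * Real.pi / n) :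
    DirIn n (j + 1) ((2 * j + 1) * Real.pi / n + δ) := by
  have hcentre : (2 * j + 1) * Real.pi / n + δ - 2 * Real.pi * (j + 1 : ℕ) / n =
      δ - Real.pi / n := by
    push_cast
    ring
  have hwidth : 2 * Real.pi / n = Real.pi / n + Real.pi / n := by ring
  rw [DirIn, hcentre, abs_lt]
  constructor <;> linarith

theorem dirIn_mod (hn : n ≠ 0) (h : DirIn n j θ) :
    DirIn n (j % n) (θ - (j / n : ℕ) * (2 * Real.pi)) := by
  have hj : (j : ℝ) = n * (j / n : ℕ) + (j % n : ℕ) := by exact_mod_cast (Nat.div_add_mod j n).symm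
  rw [DirIn, hj] at h
  rw [DirIn]
  convert h using 2
  field_simp
  ring

/-- `f` tends to `l` along every ray of the Stokes sector `S_j`. For `l = 𝓝 w` this says that `w`
is the asymptotic value of `f` in `S_j`. -/
def TendstoOnRays {β : Type*} (n j : ℕ) (f : ℂ → β) (l : Filter β) : Prop :=
  ∀ θ : ℝ, DirIn n j θ →
    Tendsto (fun r : ℝ => f ((r : ℂ) * Complex.exp (θ * Complex.I))) atTop l

variable {β : Type*} {f : ℂ → β} {l : Filter β}

theorem TendstoOnRays.of_mod (hn : n ≠ 0) (h : TendstoOnRays n (j % n) f l) :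
    TendstoOnRays n j f l := fun θ hθ => by
  have hexp : Complex.exp ((θ - (j / n : ℕ) * (2 * Real.pi) : ℝ) * I) = Complex.exp (θ * I) := by
    push_cast
    rw [sub_mul, mul_assoc, Complex.exp_periodic.sub_nat_mul_eq]
  simpa only [hexp] using h _ (dirIn_mod hn hθ)

theorem TendstoOnRays.sub_const_mul_div {y y₁ : ℂ → ℂ} {w : ℂ}
    (h : TendstoOnRays n j (fun z => y z / y₁ z) (𝓝 w)) :
    TendstoOnRays n j (fun z => (y z - w * y₁ z) / y₁ z) (𝓝 0) := fun θ hθ => by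
  have hsub := (h θ hθ).sub_const w
  rw [sub_self] at hsub
  refine squeeze_zero_norm (fun r => ?_) (tendsto_zero_iff_norm_tendsto_zero.1 hsub)
  rcases eq_or_ne (y₁ (r * Complex.exp (θ * I))) 0 with h0 | h0
  · simp [h0]
  · simp only [sub_div, mul_div_cancel_right₀ _ h0, le_refl]

theorem TendstoOnRays.inv_of_norm_tendsto_atTop {f : ℂ → ℂ}
    (h : TendstoOnRays n j (fun z => ‖f z‖) atTop) :
    TendstoOnRays n j (fun z => (f z)⁻¹) (𝓝 0) := fun θ hθ =>
  tendsto_inv₀_cobounded.comp (tendsto_norm_atTop_iff_cobounded.1 (h θ hθ))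

end StokesSector

namespace IsEntireSol_s16

variable {Q u v : ℂ → ℂ} {d : ℕ}

theorem neBot_inf_principal_ne_zero (hv : IsEntireSol_s16 Q v) (hv0 : v ≠ 0) {e : ℂ} (he : e ≠ 0) :
    (atTop ⊓ 𝓟 {r : ℝ | v (r * e) ≠ 0}).NeBot :=
  frequently_mem_iff_neBot.1 fun h =>
    hv0 (eq_zero_of_eventually_ray_eq_zero hv.1 he (h.mono fun _ => not_not.1))

theorem eq_zero_of_tendstoOnRays_div (hQ : Q ~[cobounded ℂ] fun z => z ^ d)
    (hu : IsEntireSol_s16 Q u) (hv : IsEntireSol_s16 Q v) (hv0 : v ≠ 0) {j : ℕ}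
    (h₁ : TendstoOnRays (d + 2) j (fun z => u z / v z) (𝓝 0))
    (h₂ : TendstoOnRays (d + 2) (j + 1) (fun z => u z / v z) (𝓝 0)) : u = 0 := by
  set δ : ℝ := 2 * Real.pi / (3 * (d + 2)) with hδ
  have hδ_mul : (d + 2) * δ = 2 * Real.pi / 3 := by
    rw [hδ]
    field_simp
  have hδ0 : 0 < δ := by
    have := Real.pi_pos
    positivity
  have hδ_lt : δ < 2 * Real.pi / (d + 2 : ℕ) := by
    rw [lt_div_iff₀ (by positivity), mul_comm]
    push_cast
    linarith [Real.pi_pos]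
  have hdom {e : ℂ} (h : Tendsto (fun r : ℝ => u (r * e) / v (r * e)) atTop (𝓝 0)) :
      (fun r : ℝ => u (r * e)) =o[atTop ⊓ 𝓟 {r : ℝ | v (r * e) ≠ 0}] fun r : ℝ => v (r * e) :=
    (isLittleO_iff_tendsto' (eventually_inf_principal.2 (.of_forall fun _ h h' => (h h').elim))).2
      (h.mono_left inf_le_left)
  have hneBot (θ : ℝ) := hv.neBot_inf_principal_ne_zero hv0 (Complex.exp_ne_zero (θ * I))
  exact hu.eq_zero_of_isLittleO hQ hv
    (exp_two_mul_add_one_mul_pi_div_mul_I_pow (d + 1).succ_ne_zero j) hδ0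
    (by linarith [Real.pi_pos]) (by linarith [Real.pi_pos]) inf_le_left inf_le_left
    (hdom (h₁ _ (dirIn_sub hδ0 hδ_lt))) (hdom (h₂ _ (dirIn_succ_add hδ0 hδ_lt)))

end IsEntireSol_s16

theorem isEquivalent_Pol_sub {d : ℕ} (hd : 1 ≤ d) (α : Fin (d - 1) → ℂ) (lam : ℂ) :
    (fun z => Pol d α z - lam) ~[cobounded ℂ] fun z => z ^ d := by
  have hmonomial {k : ℕ} (hk : k < d) (a : ℂ) :
      (fun z : ℂ => a * z ^ k) =o[cobounded ℂ] fun z => z ^ d :=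
    (isLittleO_pow_pow_cobounded_of_lt hk).const_mul_left a
  have hsum : (fun z : ℂ => ∑ i : Fin (d - 1), α i * z ^ ((i : ℕ) + 1)) =o[cobounded ℂ]
      fun z => z ^ d := IsLittleO.fun_sum fun i _ => hmonomial (by omega) (α i)
  refine (hsum.sub (hmonomial hd lam)).congr_left fun z => ?_
  simp only [Pol, Pi.sub_apply]
  ring

theorem stmt16_general {Q y y₁ : ℂ → ℂ} {d : ℕ} (hQ : Q ~[cobounded ℂ] fun z => z ^ d)
    (hy : IsEntireSol_s16 Q y) (hy₁ : IsEntireSol_s16 Q y₁) (hind : LinearIndependent ℂ ![y, y₁]) (j : ℕ) :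
    (¬ ∃ w : ℂ, TendstoOnRays (d + 2) j (fun z => y z / y₁ z) (𝓝 w) ∧
        TendstoOnRays (d + 2) ((j + 1) % (d + 2)) (fun z => y z / y₁ z) (𝓝 w)) ∧
      ¬ (TendstoOnRays (d + 2) j (fun z => ‖y z / y₁ z‖) atTop ∧
        TendstoOnRays (d + 2) ((j + 1) % (d + 2)) (fun z => ‖y z / y₁ z‖) atTop) := by
  have hn : d + 2 ≠ 0 := (d + 1).succ_ne_zero
  have hy0 : y ≠ 0 := hind.ne_zero 0
  have hy₁0 : y₁ ≠ 0 := hind.ne_zero 1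
  refine ⟨fun ⟨w, h₁, h₂⟩ => ?_, fun ⟨h₁, h₂⟩ => hy₁0 ?_⟩
  · have hzero := (hy.sub_const_mul hy₁ w).eq_zero_of_tendstoOnRays_div hQ hy₁ hy₁0
      h₁.sub_const_mul_div (h₂.of_mod hn).sub_const_mul_div
    have hcomb : (1 : ℂ) • y + (-w) • y₁ = 0 := by
      simpa [sub_eq_add_neg, funext_iff] using hzero
    exact one_ne_zero (LinearIndependent.pair_iff.1 hind 1 (-w) hcomb).1
  · refine hy₁.eq_zero_of_tendstoOnRays_div hQ hy hy0 (j := j) ?_ ?_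
    · simpa only [inv_div] using h₁.inv_of_norm_tendsto_atTop
    · simpa only [inv_div] using (h₂.of_mod hn).inv_of_norm_tendsto_atTop

theorem stmt16 (d : ℕ) (hd : 2 ≤ d) (n : ℕ) (hn : n = d + 2)
    (α : Fin (d - 1) → ℂ) (lam : ℂ)
    (y y₁ : ℂ → ℂ) (hy : IsSol d α lam y) (hy₁ : IsSol d α lam y₁)
    (hind : LinearIndependent ℂ ![y, y₁])
    (f : ℂ → ℂ) (hf : f = fun z => y z / y₁ z)
    (j : ℕ) (hj : j < n) :
    (¬ ∃ w : ℂ,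
        (∀ θ : ℝ, DirIn n j θ →
          Tendsto (fun r : ℝ => f ((r : ℂ) * Complex.exp (θ * Complex.I))) atTop (𝓝 w)) ∧
        (∀ θ : ℝ, DirIn n ((j + 1) % n) θ →
          Tendsto (fun r : ℝ => f ((r : ℂ) * Complex.exp (θ * Complex.I))) atTop (𝓝 w))) ∧
    ¬ ((∀ θ : ℝ, DirIn n j θ →
          Tendsto (fun r : ℝ => ‖f ((r : ℂ) * Complex.exp (θ * Complex.I))‖) atTop atTop) ∧
       (∀ θ : ℝ, DirIn n ((j + 1) % n) θ →
          Tendsto (fun r : ℝ => ‖f ((r : ℂ) * Complex.exp (θ * Complex.I))‖) atTop atTop)) := by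
  subst hn hf
  exact stmt16_general (isEquivalent_Pol_sub (by omega) α lam) hy hy₁ hind j
end
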